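/- arXiv:1106.4416 — 2 statements merged into one kernel-verified Lean document; each statement's English description precedes it below -/
import Mathlib

section
/- (Andersén–Lempert theorem for ℂⁿ.) Let n ≥ 2, let Ω ⊆ ℂⁿ be open, and let Φ : [0,1] × Ω → ℂⁿ be a map that is C¹-smooth jointly in (t, z) (as a map of real variables) and satisfies: (1) for every t ∈ [0,1] the map Φ_t := Φ(t, ·) : Ω → ℂⁿ is holomorphic and injective; (2) Φ₀ is the inclusion of Ω into ℂⁿ; (3) Φ_t(Ω) is Runge in ℂⁿ for every t ∈ [0,1]. Then for every ε > 0 and every compact set K ⊆ Ω there is a continuous map α : [0,1] × ℂⁿ → ℂⁿ such that each α_t := α(t, ·) is a holomorphic automorphism of ℂⁿ, α₀ = id, and ‖α_t(z) − Φ_t(z)‖ < ε for all t ∈ [0,1] and all z ∈ K. (This is Theorem 2.3 of the paper specialized to X = ℂⁿ, which has the density property.) -/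
/-- An open set `Ω ⊆ ℂⁿ` is Runge in `ℂⁿ` if every function holomorphic on `Ω`
can be approximated uniformly on every compact subset of `Ω` by entire
functions. -/
def IsRungeIn {n : ℕ} (Ω : Set (EuclideanSpace ℂ (Fin n))) : Prop :=
  ∀ f : EuclideanSpace ℂ (Fin n) → ℂ, DifferentiableOn ℂ f Ω →
    ∀ K : Set (EuclideanSpace ℂ (Fin n)), K ⊆ Ω → IsCompact K →
      ∀ ε : ℝ, 0 < ε →
        ∃ g : EuclideanSpace ℂ (Fin n) → ℂ, Differentiable ℂ g ∧
          ∀ z ∈ K, ‖g z - f z‖ < ε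

/-- A holomorphic automorphism of `ℂⁿ`: a bijective entire map whose inverse is
also entire. -/
def IsHolomorphicAutomorphism {n : ℕ} (g : EuclideanSpace ℂ (Fin n) → EuclideanSpace ℂ (Fin n)) :
    Prop :=
  Differentiable ℂ g ∧
    ∃ ginv : EuclideanSpace ℂ (Fin n) → EuclideanSpace ℂ (Fin n),
      Differentiable ℂ ginv ∧ Function.LeftInverse ginv g ∧ Function.RightInverse ginv g

/-!
Transported to `Φ_t(Ω)`, the velocity of the isotopy at time `t` is a holomorphic vector field
there: `Φ_t` has a holomorphic inverse, since an injective equidimensional holomorphic map has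
invertible differential (Osgood; proved by induction on the dimension). As `Φ_t(Ω)` is Runge, this
field is approximated on compact sets by entire fields. Entire functions are limits of linear
combinations of exponentials `exp ∘ ℓ` with `ℓ` linear, and `exp (ℓ z) • v` is a sum of a shear and
an overshear field as soon as `2 ≤ n`; hence every entire field is a limit of sums of complete
ones, so it is nearly the velocity at time `0` of a path of automorphisms.

Euler's method then composes short pieces of such paths. The error is measured in the initial
point: `α_t(z) = Φ_t(z')` with `z'` drifting away from `z` at speed at most `ε`. The quantitative
inverse function theorem, uniform in `t`, turns the first-order error of each piece into such a
drift, so the drifts add up to at most `ε t`, whatever the number of steps.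
-/

open Set Filter Metric
open scoped Topology

section Holomorphic

variable {E F : Type*} [NormedAddCommGroup E] [NormedSpace ℂ E]
  [NormedAddCommGroup F] [NormedSpace ℂ F]

theorem norm_fderiv_le_of_forall_mem_ball {f : E → F} {c : E} {R M : ℝ} (hR : 0 < R)
    (hf : DifferentiableOn ℂ f (ball c R)) (hM : ∀ z ∈ ball c R, ‖f z‖ ≤ M) :
    ‖fderiv ℂ f c‖ ≤ 2 * M / R := by
  refine Complex.norm_fderiv_le_div_of_mapsTo_ball hf (fun z hz => ?_) hR
  rw [mem_closedBall, dist_eq_norm]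
  calc ‖f z - f c‖ ≤ ‖f z‖ + ‖f c‖ := norm_sub_le _ _
    _ ≤ 2 * M := by linarith [hM z hz, hM c (mem_ball_self hR)]

theorem norm_fderiv_sub_fderiv_le {f g : E → F} {c : E} {R M : ℝ} (hR : 0 < R)
    (hf : DifferentiableOn ℂ f (ball c R)) (hg : DifferentiableOn ℂ g (ball c R))
    (hM : ∀ z ∈ ball c R, ‖f z - g z‖ ≤ M) :
    ‖fderiv ℂ f c - fderiv ℂ g c‖ ≤ 2 * M / R := by
  have hc : ball c R ∈ 𝓝 c := ball_mem_nhds c hR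
  rw [← fderiv_fun_sub (hf.differentiableAt hc) (hg.differentiableAt hc)]
  exact norm_fderiv_le_of_forall_mem_ball hR (hf.fun_sub hg) hM

theorem continuousOn_fderiv_of_continuousOn_uncurry [FiniteDimensional ℂ E] {T : Type*}
    [TopologicalSpace T] {S : Set T} {U : Set E} {f : T → E → F} (hU : IsOpen U)
    (hf : ContinuousOn (fun p : T × E => f p.1 p.2) (S ×ˢ U))
    (hd : ∀ t ∈ S, DifferentiableOn ℂ (f t) U) :
    ContinuousOn (fun p : T × E => fderiv ℂ (f p.1) p.2) (S ×ˢ U) := by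
  have : ProperSpace E := FiniteDimensional.proper ℂ E
  rintro ⟨t₀, z₀⟩ ⟨ht₀, hz₀⟩
  obtain ⟨r, hr, hrU⟩ := Metric.isOpen_iff.1 hU z₀ hz₀
  have hmem {z w : E} (hz : z ∈ ball z₀ (r / 2)) (hw : w ∈ closedBall 0 (r / 2)) : z + w ∈ U :=
    hrU <| by
      rw [mem_closedBall_zero_iff] at hw
      rw [mem_ball_iff_norm] at hz ⊢
      rw [add_sub_right_comm]
      linarith [norm_add_le (z - z₀) w]
  have hcont : ContinuousOn (Function.uncurry fun (p : T × E) w => f p.1 (p.2 + w))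
      ((S ×ˢ ball z₀ (r / 2)) ×ˢ closedBall 0 (r / 2)) :=
    hf.comp (f := fun q : (T × E) × E => (q.1.1, q.1.2 + q.2)) (by fun_prop)
      fun q hq => ⟨hq.1.1, hmem hq.1.2 hq.2⟩
  have hdiff {p : T × E} (hp : p ∈ S ×ˢ ball z₀ (r / 2)) :
      DifferentiableOn ℂ (fun w => f p.1 (p.2 + w)) (ball 0 (r / 2)) :=
    (hd p.1 hp.1).comp (by fun_prop) fun w hw => hmem hp.2 (ball_subset_closedBall hw)
  have hp₀ : (t₀, z₀) ∈ S ×ˢ ball z₀ (r / 2) := ⟨ht₀, mem_ball_self (by positivity)⟩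
  refine Metric.tendsto_nhds.2 fun ε hε => ?_
  obtain ⟨N, hN, hNε⟩ := (isCompact_closedBall (0 : E) (r / 2)).mem_uniformity_of_prod hcont hp₀
    (dist_mem_uniformity (show 0 < ε * r / 8 by positivity))
  have hball : S ×ˢ ball z₀ (r / 2) ∈ 𝓝[S ×ˢ U] (t₀, z₀) := by
    rw [nhdsWithin_prod_eq]
    exact prod_mem_prod self_mem_nhdsWithin
      (mem_nhdsWithin_of_mem_nhds (ball_mem_nhds z₀ (by positivity)))
  filter_upwards [hball, (nhdsWithin_le_iff.2 hball : 𝓝[S ×ˢ U] (t₀, z₀) ≤ _) hN] with p hp hpN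
  have key := norm_fderiv_sub_fderiv_le (M := ε * r / 8) (by positivity) (hdiff hp) (hdiff hp₀)
    fun w hw => (dist_eq_norm (f p.1 (p.2 + w)) (f t₀ (z₀ + w))).symm.trans_le
      (hNε p hpN w (ball_subset_closedBall hw)).le
  simp only [fderiv_comp_add_left, add_zero] at key
  rw [dist_eq_norm]
  refine key.trans_lt ?_
  field_simp
  linarith

theorem contDiffAt_one_of_differentiableOn [FiniteDimensional ℂ E] {f : E → F} {U : Set E}
    (hU : IsOpen U) (hf : DifferentiableOn ℂ f U) {c : E} (hc : c ∈ U) : ContDiffAt ℂ 1 f c := by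
  have hcont : ContinuousOn (fderiv ℂ f) U :=
    (continuousOn_fderiv_of_continuousOn_uncurry (T := Unit) (S := univ) hU
      (hf.continuousOn.comp continuousOn_snd fun p hp => hp.2) fun _ _ => hf).comp
      (f := fun z => ((), z)) (by fun_prop) fun z hz => ⟨mem_univ _, hz⟩
  have h : ContDiffOn ℂ (0 + 1) f U := by
    rw [contDiffOn_succ_iff_fderiv_of_isOpen hU]
    exact ⟨hf, by simp, contDiffOn_zero.2 hcont⟩
  exact (by simpa using h : ContDiffOn ℂ 1 f U).contDiffAt (hU.mem_nhds hc)

theorem differentiableAt_of_tendstoUniformlyOn_ball [CompleteSpace F] {ι : Type*} {l : Filter ι}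
    [l.NeBot] {q : ι → E → F} {f : E → F} {c : E} {R : ℝ} (hR : 0 < R)
    (hq : ∀ᶠ i in l, DifferentiableOn ℂ (q i) (ball c R))
    (hlim : TendstoUniformlyOn q f l (ball c R)) : DifferentiableAt ℂ f c := by
  have hsub : ∀ x ∈ ball c (R / 2), ball x (R / 2) ⊆ ball c R := fun x hx =>
    ball_subset_ball' (by rw [mem_ball] at hx; linarith)
  have hball : ball c (R / 2) ∈ 𝓝 c := ball_mem_nhds c (by positivity)
  have hcauchy : UniformCauchySeqOn (fun i => fderiv ℂ (q i)) l (ball c (R / 2)) := by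
    intro u hu
    obtain ⟨ε, hε, hεu⟩ := Metric.mem_uniformity_dist.1 hu
    filter_upwards [hlim.uniformCauchySeqOn _ (dist_mem_uniformity
      (show 0 < ε * R / 8 by positivity)), hq.prod_mk hq] with i hi hqi x hx
    refine hεu ((dist_eq_norm _ _).trans_lt ((norm_fderiv_sub_fderiv_le (R := R / 2)
      (M := ε * R / 8) (by positivity) (hqi.1.mono (hsub x hx)) (hqi.2.mono (hsub x hx))
      fun z hz => (dist_eq_norm (q i.1 z) (q i.2 z)).symm.trans_le
        (hi z (hsub x hx hz)).le).trans_lt ?_))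
    field_simp
    linarith
  have hlimx : ∀ x ∈ ball c (R / 2), ∃ g', Tendsto (fun i => fderiv ℂ (q i) x) l (𝓝 g') :=
    fun x hx => cauchy_map_iff_exists_tendsto.1 (hcauchy.cauchy_map hx)
  choose! g' hg' using hlimx
  have hunif := hcauchy.tendstoUniformlyOn_of_tendsto hg'
  refine (hasFDerivAt_of_tendstoUniformlyOnFilter (𝕜 := ℂ) (f := q) (l := l)
    (f' := fun i => fderiv ℂ (q i)) (g' := g') (x := c) ?_ ?_ ?_).differentiableAt
  · exact (tendstoUniformlyOn_iff_tendstoUniformlyOnFilter.1 hunif).mono_right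
      (le_principal_iff.2 hball)
  · filter_upwards [hq.prod_mk hball] with p hp
    exact (hp.1.differentiableAt (isOpen_ball.mem_nhds
      (ball_subset_ball (by linarith) hp.2))).hasFDerivAt
  · filter_upwards [hball] with y hy
    exact hlim.tendsto_at (ball_subset_ball (by linarith) hy)

theorem exists_forall_norm_sub_sub_smul_le {X G : Type*} [PseudoMetricSpace X]
    [NormedAddCommGroup G] [NormedSpace ℝ G] {a b : ℝ} {K : Set X} {f D : ℝ → X → G}
    (hK : IsCompact K) (hD : ContinuousOn (fun p : ℝ × X => D p.1 p.2) (Icc a b ×ˢ K))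
    (hf : ∀ t ∈ Icc a b, ∀ x ∈ K, HasDerivWithinAt (fun t => f t x) (D t x) (Icc a b) t)
    {ε : ℝ} (hε : 0 < ε) :
    ∃ δ > 0, ∀ t ∈ Icc a b, ∀ s ∈ Icc a b, |s - t| < δ → ∀ x ∈ K,
      ‖f s x - f t x - (s - t) • D t x‖ ≤ ε * |s - t| := by
  obtain ⟨δ, hδ, H⟩ := Metric.uniformContinuousOn_iff.1
    ((isCompact_Icc.prod hK).uniformContinuousOn_of_continuous hD) ε hε
  refine ⟨δ, hδ, fun t ht s hs hst x hx => ?_⟩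
  have hsub : uIcc t s ⊆ Icc a b := ordConnected_Icc.uIcc_subset ht hs
  have key := (convex_uIcc t s).norm_image_sub_le_of_norm_hasDerivWithin_le (C := ε)
    (f := fun r => f r x - r • D t x) (f' := fun r => D r x - (1 : ℝ) • D t x)
    (fun r hr => ((hf r (hsub hr) x hx).mono hsub).sub
      ((hasDerivWithinAt_id r _).smul_const (D t x)))
    (fun r hr => by
      rw [one_smul, ← dist_eq_norm]
      refine (H (r, x) ⟨hsub hr, hx⟩ (t, x) ⟨ht, hx⟩ ?_).le
      rw [dist_prod_same_right, Real.dist_eq]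
      exact (abs_sub_left_of_mem_uIcc hr).trans_lt hst) left_mem_uIcc right_mem_uIcc
  rw [Real.norm_eq_abs] at key
  convert key using 2
  rw [sub_smul]
  abel

theorem tendstoUniformlyOn_slope {X G : Type*} [PseudoMetricSpace X]
    [NormedAddCommGroup G] [NormedSpace ℝ G] {a b t : ℝ} {K : Set X} {f D : ℝ → X → G}
    (hK : IsCompact K) (hD : ContinuousOn (fun p : ℝ × X => D p.1 p.2) (Icc a b ×ˢ K))
    (hf : ∀ t ∈ Icc a b, ∀ x ∈ K, HasDerivWithinAt (fun t => f t x) (D t x) (Icc a b) t)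
    (ht : t ∈ Icc a b) :
    TendstoUniformlyOn (fun s x => slope (fun r => f r x) t s) (D t) (𝓝[Icc a b \ {t}] t) K := by
  refine Metric.tendstoUniformlyOn_iff.2 fun ε hε => ?_
  obtain ⟨δ, hδ, H⟩ := exists_forall_norm_sub_sub_smul_le hK hD hf (half_pos hε)
  filter_upwards [self_mem_nhdsWithin, nhdsWithin_le_nhds (ball_mem_nhds t hδ)] with s hs hsδ x hx
  have hexp := H t ht s hs.1 (by rwa [mem_ball, Real.dist_eq] at hsδ) x hx
  have hst : s - t ≠ 0 := sub_ne_zero.2 hs.2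
  have hslope : slope (fun r => f r x) t s - D t x
      = (s - t)⁻¹ • (f s x - f t x - (s - t) • D t x) := by
    rw [slope_def_module, smul_sub (s - t)⁻¹ _ ((s - t) • _), inv_smul_smul₀ hst]
  rw [dist_comm, dist_eq_norm, hslope, norm_smul, norm_inv, Real.norm_eq_abs,
    inv_mul_lt_iff₀ (abs_pos.2 hst)]
  nlinarith [abs_pos.2 hst]

theorem differentiableOn_of_hasDerivWithinAt [FiniteDimensional ℂ E] [CompleteSpace F] {a b t : ℝ}
    {U : Set E} {f D : ℝ → E → F} (hab : a < b) (ht : t ∈ Icc a b) (hU : IsOpen U)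
    (hd : ∀ s ∈ Icc a b, DifferentiableOn ℂ (f s) U)
    (hD : ContinuousOn (fun p : ℝ × E => D p.1 p.2) (Icc a b ×ˢ U))
    (hf : ∀ s ∈ Icc a b, ∀ z ∈ U, HasDerivWithinAt (fun s => f s z) (D s z) (Icc a b) s) :
    DifferentiableOn ℂ (D t) U := by
  have : ProperSpace E := FiniteDimensional.proper ℂ E
  intro c hc
  obtain ⟨r, hr, hrU⟩ := nhds_basis_closedBall.mem_iff.1 (hU.mem_nhds hc)
  have : (𝓝[Icc a b \ {t}] t).NeBot :=
    accPt_principal_iff_nhdsWithin.1 (uniqueDiffOn_Icc hab t ht).accPt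
  refine (differentiableAt_of_tendstoUniformlyOn_ball (l := 𝓝[Icc a b \ {t}] t) hr ?_
    ((tendstoUniformlyOn_slope (isCompact_closedBall c r) (hD.mono (prod_mono_right hrU))
      (fun s hs z hz => hf s hs z (hrU hz)) ht).mono
        ball_subset_closedBall)).differentiableWithinAt
  filter_upwards [self_mem_nhdsWithin] with s hs
  exact (((hd s hs.1).fun_sub (hd t ht)).fun_const_smul (s - t)⁻¹).mono
    (ball_subset_closedBall.trans hrU)

theorem differentiableOn_fderiv_apply [FiniteDimensional ℂ E] [CompleteSpace F] {f : E → F}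
    {U : Set E} (hU : IsOpen U) (hf : DifferentiableOn ℂ f U) (v : E) :
    DifferentiableOn ℂ (fun z => fderiv ℂ f z v) U := by
  intro c hc
  obtain ⟨W, hW, hcW, δ, hδ, hWU⟩ : ∃ W, IsOpen W ∧ c ∈ W ∧ ∃ δ > 0,
      ∀ s ∈ Icc (0 : ℝ) δ, ∀ z ∈ W, z + s • v ∈ U := by
    have hcont : Continuous fun p : ℝ × E => p.2 + p.1 • v := by fun_prop
    obtain ⟨I, W, hI, h0I, hW, hcW, hIW⟩ := mem_nhds_prod_iff'.1
      ((hU.preimage hcont).mem_nhds (show ((0 : ℝ), c) ∈ _ by simpa using hc))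
    obtain ⟨δ, hδ, hδI⟩ := nhds_basis_closedBall.mem_iff.1 (hI.mem_nhds h0I)
    refine ⟨W, hW, hcW, δ, hδ, fun s hs z hz => @hIW (s, z) ⟨hδI ?_, hz⟩⟩
    rw [mem_closedBall_zero_iff, Real.norm_of_nonneg hs.1]
    exact hs.2
  have hderiv : ∀ s ∈ Icc (0 : ℝ) δ, ∀ z ∈ W, HasDerivWithinAt (fun s : ℝ => f (z + s • v))
      (fderiv ℂ f (z + s • v) v) (Icc 0 δ) s := fun s hs z hz => by
    have hline : HasDerivAt (fun s : ℝ => z + s • v) v s := by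
      simpa using ((hasDerivAt_id s).smul_const v).const_add z
    exact (((hf.differentiableAt (hU.mem_nhds (hWU s hs z hz))).hasFDerivAt.restrictScalars
      ℝ).comp_hasDerivAt s hline).hasDerivWithinAt
  have hcont : ContinuousOn (fun p : ℝ × E => fderiv ℂ f (p.2 + p.1 • v) v) (Icc 0 δ ×ˢ W) :=
    fun p hp => (((contDiffAt_one_of_differentiableOn hU hf
      (hWU p.1 hp.1 p.2 hp.2)).continuousAt_fderiv one_ne_zero).comp
      (f := fun p : ℝ × E => p.2 + p.1 • v) (by fun_prop)).clm_apply
      continuousAt_const |>.continuousWithinAt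
  have := differentiableOn_of_hasDerivWithinAt (t := 0) hδ (left_mem_Icc.2 hδ.le) hW
    (fun s hs => hf.comp (by fun_prop) fun z hz => hWU s hs z hz) hcont hderiv
  simpa using (this.differentiableAt (hW.mem_nhds hcW)).differentiableWithinAt

end Holomorphic

section Hurwitz

theorem exists_zero_mem_closedBall {f : ℂ → ℂ} {c : ℂ} {r m : ℝ} (hr : 0 < r)
    (hf : DifferentiableOn ℂ f (closedBall c r)) (hc : ‖f c‖ < m)
    (hm : ∀ z ∈ sphere c r, m ≤ ‖f z‖) : ∃ z ∈ closedBall c r, f z = 0 := by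
  by_contra! hne
  have hm0 : 0 < m := (norm_nonneg _).trans_lt hc
  have hd : DiffContOnCl ℂ (fun z => (f z)⁻¹) (ball c r) :=
    DifferentiableOn.diffContOnCl (by rw [closure_ball _ hr.ne']; exact hf.inv hne)
  have hle : ‖(f c)⁻¹‖ ≤ m⁻¹ :=
    Complex.norm_le_of_forall_mem_frontier_norm_le isBounded_ball hd
      (fun z hz => by
        rw [frontier_ball _ hr.ne'] at hz
        rw [norm_inv]
        exact inv_anti₀ hm0 (hm z hz)) (subset_closure (mem_ball_self hr))
  rw [norm_inv, inv_le_inv₀ (norm_pos_iff.2 (hne c (mem_closedBall_self hr.le))) hm0] at hle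
  exact hle.not_gt hc

theorem eventually_exists_zero {X : Type*} [TopologicalSpace X] {h : X → ℂ → ℂ} {x₀ : X} {z₀ : ℂ}
    (hcont : ∀ᶠ z in 𝓝 z₀, ContinuousAt (fun p : X × ℂ => h p.1 p.2) (x₀, z))
    (hdiff : ∀ᶠ p : X × ℂ in 𝓝 (x₀, z₀), DifferentiableAt ℂ (h p.1) p.2)
    (h0 : h x₀ z₀ = 0) (hne : ∀ᶠ z in 𝓝[≠] z₀, h x₀ z ≠ 0) {W : Set ℂ} (hW : W ∈ 𝓝 z₀) :
    ∀ᶠ x in 𝓝 x₀, ∃ z ∈ W, h x z = 0 := by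
  rw [nhds_prod_eq] at hdiff
  obtain ⟨P, hP, Q, hQ, hPQ⟩ := eventually_prod_iff.1 hdiff
  obtain ⟨r, hr, hball⟩ := nhds_basis_closedBall.eventually_iff.1
    (hcont.and (hQ.and ((eventually_nhdsWithin_iff.1 hne).and hW)))
  have hsphere : ∀ z ∈ sphere z₀ r, z ∈ closedBall z₀ r := fun z hz => sphere_subset_closedBall hz
  have hslice : ContinuousOn (fun z => ‖h x₀ z‖) (sphere z₀ r) := fun z hz =>
    (((hball (hsphere z hz)).1.comp (f := fun z => (x₀, z)) (by fun_prop)).norm).continuousWithinAt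
  obtain ⟨m, hm, hmle⟩ := (isCompact_sphere z₀ r).exists_forall_le' hslice (a := 0) fun z hz =>
    norm_pos_iff.2 ((hball (hsphere z hz)).2.2.1 (ne_of_mem_sphere hz hr.ne'))
  have hlarge : ∀ᶠ x in 𝓝 x₀, ∀ z ∈ sphere z₀ r, m / 2 < ‖h x z‖ :=
    (isCompact_sphere z₀ r).eventually_forall_of_forall_eventually fun z hz =>
      (hball (hsphere z hz)).1.norm.eventually (lt_mem_nhds (by linarith [hmle z hz]))
  have hsmall : ∀ᶠ x in 𝓝 x₀, ‖h x z₀‖ < m / 2 :=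
    ((hball (mem_closedBall_self hr.le)).1.comp (f := fun x => (x, z₀))
      (by fun_prop)).norm.eventually (gt_mem_nhds (by simpa [h0] using hm))
  filter_upwards [hlarge, hsmall, hP] with x hxl hxs hxP
  obtain ⟨z, hz, hz0⟩ := exists_zero_mem_closedBall hr (fun z hz =>
    (hPQ hxP (hball hz).2.1).differentiableWithinAt) hxs fun z hz => (hxl z hz).le
  exact ⟨z, (hball hz).2.2.2, hz0⟩

theorem continuousAt_dslope_prod {f : ℂ → ℂ} {a z : ℂ} (hfa : AnalyticAt ℂ f a)
    (hfz : ContinuousAt f z) : ContinuousAt (fun p : ℂ × ℂ => dslope f p.1 p.2) (a, z) := by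
  rcases eq_or_ne z a with rfl | hza
  · have hstrict : HasStrictDerivAt f (deriv f z) z := hfa.hasStrictDerivAt
    refine Metric.tendsto_nhds.2 fun ε hε => ?_
    have hderiv : ∀ᶠ p : ℂ × ℂ in 𝓝 (z, z), ‖deriv f p.1 - deriv f z‖ ≤ ε / 2 := by
      filter_upwards [(hfa.deriv.continuousAt.comp_of_eq (x := (z, z)) continuousAt_fst
        rfl).preimage_mem_nhds (closedBall_mem_nhds _ (half_pos hε))] with p hp
        using mem_closedBall_iff_norm.1 hp
    filter_upwards [hderiv, hstrict.hasStrictFDerivAt.isLittleO.bound (half_pos hε)] with p hp hpε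
    rw [dslope_same, dist_eq_norm]
    refine lt_of_le_of_lt ?_ (half_lt_self hε)
    rcases eq_or_ne p.2 p.1 with h | h
    · rwa [h, dslope_same]
    · have hsub : p.1 - p.2 ≠ 0 := sub_ne_zero.2 h.symm
      have hquot : dslope f p.1 p.2 - deriv f z
          = (f p.1 - f p.2 - (p.1 - p.2) * deriv f z) / (p.1 - p.2) := by
        rw [dslope_of_ne _ h, slope_comm, slope_def_field]
        field_simp
      rw [hquot, norm_div, div_le_iff₀ (norm_pos_iff.2 hsub)]
      simpa using hpε
  · have hne : ∀ᶠ p : ℂ × ℂ in 𝓝 (a, z), p.2 ≠ p.1 :=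
      (isOpen_ne_fun continuous_snd continuous_fst).mem_nhds hza
    have hslope : ContinuousAt (fun p : ℂ × ℂ => (f p.2 - f p.1) / (p.2 - p.1)) (a, z) :=
      (hfz.comp_of_eq continuousAt_snd rfl |>.sub (hfa.continuousAt.comp_of_eq continuousAt_fst
        rfl)).div (by fun_prop) (sub_ne_zero.2 hza)
    exact hslope.congr (hne.mono fun p hp => by simp only [dslope_of_ne f hp, slope_def_field])

theorem deriv_ne_zero_of_injOn {f : ℂ → ℂ} {U : Set ℂ} (hU : IsOpen U)
    (hf : DifferentiableOn ℂ f U) (hinj : InjOn f U) {a : ℂ} (ha : a ∈ U) : deriv f a ≠ 0 := by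
  intro h0
  have hslope_ne {x z : ℂ} (hx : x ∈ U) (hz : z ∈ U) (hne : z ≠ x) : dslope f x z ≠ 0 := by
    rw [dslope_of_ne _ hne, slope_def_field]
    exact div_ne_zero (sub_ne_zero.2 fun h => hne (hinj hz hx h)) (sub_ne_zero.2 hne)
  have hderiv_ne : ∃ᶠ x in 𝓝 a, deriv f x ≠ 0 := fun hev => by
    obtain ⟨r, hr, hball⟩ := Metric.eventually_nhds_iff_ball.1 (hev.and (hU.mem_nhds ha))
    have hconst : ∀ z ∈ ball a r, z = a := fun z hz => hinj (hball z hz).2 ha <|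
      isOpen_ball.is_const_of_deriv_eq_zero (convex_ball a r).isPreconnected
        (hf.mono fun z hz => (hball z hz).2) (fun z hz => not_not.1 (hball z hz).1) hz
        (mem_ball_self hr)
    have hpunctured : ∀ᶠ z in 𝓝[≠] a, z ≠ a ∧ z ∈ ball a r :=
      eventually_mem_nhdsWithin.and (mem_nhdsWithin_of_mem_nhds (ball_mem_nhds a hr))
    obtain ⟨z, hza, hz⟩ := hpunctured.exists
    exact hza (hconst z hz)
  have hzero : ∀ᶠ x in 𝓝 a, ∃ z ∈ U, dslope f x z = 0 := by
    refine eventually_exists_zero ?_ ?_ (by rwa [dslope_same]) ?_ (hU.mem_nhds ha)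
    · filter_upwards [hU.mem_nhds ha] with z hz using continuousAt_dslope_prod
        (hf.analyticAt (hU.mem_nhds ha)) (hf.differentiableAt (hU.mem_nhds hz)).continuousAt
    · filter_upwards [(hU.prod hU).mem_nhds (mk_mem_prod ha ha)] with p hp using
        ((Complex.differentiableOn_dslope (hU.mem_nhds hp.1)).2 hf).differentiableAt
          (hU.mem_nhds hp.2)
    · filter_upwards [self_mem_nhdsWithin, mem_nhdsWithin_of_mem_nhds (hU.mem_nhds ha)]
        with z hza hz using hslope_ne ha hz hza
  obtain ⟨x, hx, ⟨z, hz, hxz⟩, hxU⟩ :=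
    (hderiv_ne.and_eventually (hzero.and (hU.mem_nhds ha))).exists
  rcases eq_or_ne z x with rfl | hne
  · exact hx (by rwa [dslope_same] at hxz)
  · exact hslope_ne hxU hz hne hxz

end Hurwitz

section Osgood

variable {E : Type*} [NormedAddCommGroup E] [NormedSpace ℂ E]

theorem hasDerivAt_add_smul (c v : E) (s : ℂ) : HasDerivAt (fun s : ℂ => c + s • v) v s := by
  simpa using ((hasDerivAt_id s).smul_const v).const_add c

theorem eventually_apply_add_smul_ne_zero {h g : E → ℂ} {U : Set E} (hU : IsOpen U)
    (hh : DifferentiableOn ℂ h U) (hg : DifferentiableOn ℂ g U)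
    (hgh : ∀ z ∈ U, h z = 0 → g z = 0) {b w : E} (hb : b ∈ U) (hw : fderiv ℂ g b w ≠ 0) :
    ∀ᶠ s : ℂ in 𝓝[≠] 0, h (b + s • w) ≠ 0 := by
  have hcont : Continuous fun s : ℂ => b + s • w := by fun_prop
  have hmem : ∀ᶠ s : ℂ in 𝓝 0, b + s • w ∈ U :=
    (hU.preimage hcont).eventually_mem (by simpa using hb)
  have hline : AnalyticAt ℂ (fun s : ℂ => h (b + s • w)) 0 :=
    DifferentiableOn.analyticAt (hh.comp (by fun_prop) fun s hs => hs) hmem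
  refine hline.eventually_eq_zero_or_eventually_ne_zero.resolve_left fun hzero => hw ?_
  have hgzero : (fun s : ℂ => g (b + s • w)) =ᶠ[𝓝 0] fun _ => 0 := by
    filter_upwards [hzero, hmem] with s hs hsU using hgh _ hsU hs
  have hderiv : HasDerivAt (fun s : ℂ => g (b + s • w)) (fderiv ℂ g b w) 0 :=
    (hg.differentiableAt (hU.mem_nhds hb)).hasFDerivAt.comp_hasDerivAt_of_eq 0
      (hasDerivAt_add_smul b w 0) (by simp)
  rw [← hderiv.deriv, hgzero.deriv_eq, deriv_const]

theorem not_injOn_of_fderiv_eq_zero [Nontrivial E] {f : E → E} {a : E} {ρ : ℝ} (hρ : 0 < ρ)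
    (hf : DifferentiableOn ℂ f (ball a ρ)) (h0 : ∀ z ∈ ball a ρ, fderiv ℂ f z = 0) :
    ¬ InjOn f (ball a ρ) := by
  intro hinj
  have : (𝓝[≠] a).NeBot := Module.punctured_nhds_neBot ℂ E a
  have hpunctured : ∀ᶠ z in 𝓝[≠] a, z ≠ a ∧ z ∈ ball a ρ :=
    eventually_mem_nhdsWithin.and (mem_nhdsWithin_of_mem_nhds (ball_mem_nhds a hρ))
  obtain ⟨z, hza, hz⟩ := hpunctured.exists
  exact hza (hinj hz (mem_ball_self hρ) (isOpen_ball.is_const_of_fderiv_eq_zero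
    (convex_ball a ρ).isPreconnected hf h0 hz (mem_ball_self hρ)))

theorem eventuallyEq_const_of_fderiv_eq_zero_of_injOn {F : Type*}
    [NormedAddCommGroup F] [NormedSpace ℂ F] {f : E → F} {U : Set E} (hU : IsOpen U)
    (hf : DifferentiableOn ℂ f U) (hinj : InjOn f U) {γ : ℂ → E} {τ₀ : ℂ}
    (hγ : ∀ᶠ τ in 𝓝 τ₀, DifferentiableAt ℂ γ τ ∧ γ τ ∈ U ∧ fderiv ℂ f (γ τ) = 0) :
    γ =ᶠ[𝓝 τ₀] fun _ => γ τ₀ := by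
  obtain ⟨r, hr, hball⟩ := Metric.eventually_nhds_iff_ball.1 hγ
  have hfγ : ∀ σ ∈ ball τ₀ r, HasDerivAt (f ∘ γ) 0 σ := fun σ hσ => by
    obtain ⟨hdγ, hmem, hzero⟩ := hball σ hσ
    have hdf := (hf.differentiableAt (hU.mem_nhds hmem)).hasFDerivAt
    simpa [hzero] using hdf.comp_hasDerivAt σ hdγ.hasDerivAt
  have h0 := mem_ball_self (x := τ₀) hr
  filter_upwards [ball_mem_nhds τ₀ hr] with τ hτ
  exact hinj (hball τ hτ).2.1 (hball τ₀ h0).2.1 <|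
    isOpen_ball.is_const_of_deriv_eq_zero (convex_ball τ₀ r).isPreconnected
      (fun σ hσ => (hfγ σ hσ).differentiableAt.differentiableWithinAt)
      (fun σ hσ => (hfγ σ hσ).deriv) hτ h0

variable [FiniteDimensional ℂ E]

theorem differentiableOn_det_fderiv {f : E → E} {U : Set E} (hU : IsOpen U)
    (hf : DifferentiableOn ℂ f U) : DifferentiableOn ℂ (fun z => (fderiv ℂ f z).det) U := by
  have : CompleteSpace E := FiniteDimensional.complete ℂ E
  let b := Module.finBasis ℂ E
  simp only [ContinuousLinearMap.det, ← LinearMap.det_toMatrix b, Matrix.det_apply,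
    LinearMap.toMatrix_apply]
  refine DifferentiableOn.fun_sum fun σ _ => DifferentiableOn.fun_const_smul (fun z hz => ?_) _
  refine (HasFDerivAt.finsetProd fun i _ => DifferentiableAt.hasFDerivAt
    ?_).differentiableAt.differentiableWithinAt
  exact ((LinearMap.toContinuousLinearMap (b.coord (σ i))).differentiable.comp_differentiableOn
    (differentiableOn_fderiv_apply hU hf (b i))).differentiableAt (hU.mem_nhds hz)

theorem det_eq_zero_iff_not_injective {A : E →L[ℂ] E} :
    A.det = 0 ↔ ¬ Function.Injective A := by
  rw [ContinuousLinearMap.det, LinearMap.det_eq_zero_iff_ker_ne_bot, Ne, LinearMap.ker_eq_bot]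
  rfl

theorem differentiableOn_iterate_fderiv_apply {h : E → ℂ} {U : Set E} (hU : IsOpen U)
    (hh : DifferentiableOn ℂ h U) (v : E) (k : ℕ) :
    DifferentiableOn ℂ ((fun (g : E → ℂ) z => fderiv ℂ g z v)^[k] h) U := by
  induction k with
  | zero => exact hh
  | succ k ih =>
    rw [Function.iterate_succ_apply']
    exact differentiableOn_fderiv_apply hU ih v

theorem iteratedDeriv_comp_add_smul {h : E → ℂ} {U : Set E} (hU : IsOpen U)
    (hh : DifferentiableOn ℂ h U) (c v : E) (k : ℕ) {s : ℂ} (hs : c + s • v ∈ U) :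
    iteratedDeriv k (fun s : ℂ => h (c + s • v)) s
      = (fun (g : E → ℂ) z => fderiv ℂ g z v)^[k] h (c + s • v) := by
  induction k generalizing s with
  | zero => simp
  | succ k ih =>
    have hev : iteratedDeriv k (fun s : ℂ => h (c + s • v)) =ᶠ[𝓝 s]
        fun s => (fun (g : E → ℂ) z => fderiv ℂ g z v)^[k] h (c + s • v) := by
      filter_upwards [(hasDerivAt_add_smul c v s).continuousAt.preimage_mem_nhds
        (hU.mem_nhds hs)] with t ht using ih ht
    rw [iteratedDeriv_succ, hev.deriv_eq, Function.iterate_succ_apply']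
    exact (((differentiableOn_iterate_fderiv_apply hU hh v k).differentiableAt
      (hU.mem_nhds hs)).hasFDerivAt.comp_hasDerivAt s (hasDerivAt_add_smul c v s)).deriv

theorem eq_zero_of_iterate_fderiv_eq_zero {h : E → ℂ} {c v : E} {R : ℝ}
    (hh : DifferentiableOn ℂ h (ball c R)) (hv : c + v ∈ ball c R)
    (h0 : ∀ k, (fun (g : E → ℂ) z => fderiv ℂ g z v)^[k] h c = 0) : h (c + v) = 0 := by
  have hvR : ‖v‖ < R := by simpa using hv
  obtain ⟨R', hR1, hR'⟩ : ∃ R' : ℝ, 1 < R' ∧ R' * ‖v‖ < R := by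
    have hcont : Tendsto (fun s : ℝ => s * ‖v‖) (𝓝[>] 1) (𝓝 (1 * ‖v‖)) :=
      (continuous_mul_const _).continuousWithinAt
    exact (eventually_mem_nhdsWithin.and (hcont.eventually_lt_const (by simpa))).exists
  have hmem : ∀ s ∈ ball (0 : ℂ) R', c + s • v ∈ ball c R := fun s hs => by
    rw [mem_ball_zero_iff] at hs
    simpa [norm_smul] using (mul_le_mul_of_nonneg_right hs.le (norm_nonneg v)).trans_lt hR'
  have hd : DifferentiableOn ℂ (fun s : ℂ => h (c + s • v)) (ball 0 R') :=
    hh.comp (by fun_prop) hmem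
  have htaylor := Complex.taylorSeries_eq_on_ball' (c := 0) (r := R') (z := 1) (by simpa using hR1)
    hd
  have hc : c + (0 : ℂ) • v ∈ ball c R := hmem 0 (mem_ball_self (by linarith))
  simp only [iteratedDeriv_comp_add_smul isOpen_ball hh c v _ hc, zero_smul, add_zero, h0]
    at htaylor
  simpa using htaylor.symm

/-- At `b` the zeros of `h` have minimal order in the direction `v`, and `g` is the derivative of
`h` of one order less. -/
theorem exists_fderiv_apply_ne_zero_of_apply_ne_zero {h : E → ℂ} {c v : E} {R : ℝ}
    (hh : DifferentiableOn ℂ h (ball c R)) (hc : h c = 0) (hv : c + v ∈ ball c R)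
    (hcv : h (c + v) ≠ 0) :
    ∃ g : E → ℂ, DifferentiableOn ℂ g (ball c R) ∧ (∀ z ∈ ball c R, h z = 0 → g z = 0) ∧
      ∃ b ∈ ball c R, h b = 0 ∧ fderiv ℂ g b v ≠ 0 := by
  by_contra! hcon
  have hvanish (k : ℕ) : ∀ z ∈ ball c R, h z = 0 →
      (fun (g : E → ℂ) z => fderiv ℂ g z v)^[k] h z = 0 := by
    induction k with
    | zero => exact fun z _ hz => hz
    | succ k ih =>
      rw [Function.iterate_succ_apply']
      exact hcon _ (differentiableOn_iterate_fderiv_apply isOpen_ball hh v k) ih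
  exact hcv (eq_zero_of_iterate_fderiv_eq_zero hh hv fun k =>
    hvanish k c (mem_ball_self (pos_of_mem_ball hv)) hc)

theorem exists_openPartialHomeomorph_straightening {g : E → ℂ} {a : E} (hg : ContDiffAt ℂ 1 g a)
    (w : E) :
    ∃ e : OpenPartialHomeomorph E E,
      (∀ z, e z = z + (g z - g a - fderiv ℂ g a (z - a)) • w) ∧ a ∈ e.source ∧
      (∀ᶠ y in 𝓝 a, y ∈ e.target ∧ DifferentiableAt ℂ e.symm y) ∧
      HasFDerivAt e.symm (ContinuousLinearMap.id ℂ E) a := by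
  have : CompleteSpace E := FiniteDimensional.complete ℂ E
  set ψ : E → E := fun z => z + (g z - g a - fderiv ℂ g a (z - a)) • w with hψ
  have hψC : ContDiffAt ℂ 1 ψ a := by fun_prop
  have hψ' : HasFDerivAt ψ (ContinuousLinearEquiv.refl ℂ E : E →L[ℂ] E) a := by
    have hlin := (fderiv ℂ g a).hasFDerivAt.comp a ((hasFDerivAt_id a).sub_const a)
    refine ((hasFDerivAt_id a).fun_add ((((hg.differentiableAt one_ne_zero).hasFDerivAt.sub_const
      (g a)).sub hlin).smul_const w)).congr_fderiv ?_
    ext x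
    simp
  let e := hψC.toOpenPartialHomeomorph ψ hψ' one_ne_zero
  have ha : a ∈ e.source := hψC.mem_toOpenPartialHomeomorph_source hψ' one_ne_zero
  have hea : e a = a := by simp [e, hψ]
  have hat : a ∈ e.target := hea ▸ e.map_source ha
  have hsymm_a : e.symm a = a := by simpa only [hea] using e.left_inv ha
  have hsymm : ContDiffAt ℂ 1 e.symm a :=
    e.contDiffAt_symm hat (by rwa [hsymm_a]) (by rwa [hsymm_a])
  refine ⟨e, fun z => rfl, ha, (e.open_target.eventually_mem hat).and
    ((hsymm.eventually (by simp)).mono fun y hy => hy.differentiableAt one_ne_zero), ?_⟩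
  exact e.hasFDerivAt_symm (f' := ContinuousLinearEquiv.refl ℂ E) hat (by rwa [hsymm_a])

theorem exists_curve_in_zeros {h g : E → ℂ} {U : Set E} (hU : IsOpen U)
    (hh : DifferentiableOn ℂ h U) (hg : DifferentiableOn ℂ g U)
    (hgh : ∀ z ∈ U, h z = 0 → g z = 0) {b u v : E} (hb : b ∈ U) (hhb : h b = 0)
    (hv : fderiv ℂ g b v ≠ 0) (hu : fderiv ℂ g b u = 0) :
    ∃ γ : ℂ → E, γ 0 = b ∧ HasDerivAt γ u 0 ∧
      ∀ᶠ τ in 𝓝 0, DifferentiableAt ℂ γ τ ∧ γ τ ∈ U ∧ h (γ τ) = 0 := by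
  set w := (fderiv ℂ g b v)⁻¹ • v with hwdef
  have hw : fderiv ℂ g b w = 1 := by simp [hwdef, hv]
  have hgb : g b = 0 := hgh b hb hhb
  obtain ⟨e, he, hbs, hsymm, hderiv⟩ := exists_openPartialHomeomorph_straightening
    (contDiffAt_one_of_differentiableOn hU hg hb) w
  have heb : e b = b := by simp [he]
  have hγ0 : e.symm b = b := by simpa only [heb] using e.left_inv hbs
  have hline : Tendsto (fun τ : ℂ => b + τ • u) (𝓝 0) (𝓝 b) := by
    simpa using (hasDerivAt_add_smul b u 0).continuousAt.tendsto
  have hplane : Tendsto (fun p : ℂ × ℂ => b + p.1 • u + p.2 • w) (𝓝 0 ×ˢ 𝓝 0) (𝓝 b) := by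
    rw [← nhds_prod_eq]
    exact Continuous.tendsto' (by fun_prop) _ _ (by simp)
  have hnhds : U ∩ e.source ∈ 𝓝 b := inter_mem (hU.mem_nhds hb) (e.open_source.mem_nhds hbs)
  obtain ⟨P, hP, Q, hQ, hPQ⟩ := eventually_prod_iff.1 (hplane.eventually hnhds)
  have hzero : ∀ᶠ τ in 𝓝 (0 : ℂ), ∃ s ∈ {s | Q s}, h (b + τ • u + s • w) = 0 := by
    have hdiff : ∀ᶠ p : ℂ × ℂ in 𝓝 (0, 0), DifferentiableAt ℂ h (b + p.1 • u + p.2 • w) :=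
      nhds_prod_eq (X := ℂ) (Y := ℂ) ▸ hplane.eventually ((hU.eventually_mem hb).mono fun z hz =>
        hh.differentiableAt (hU.mem_nhds hz))
    refine eventually_exists_zero ?_ (hdiff.mono fun p hp => ?_) (by simpa) ?_ hQ
    · have hslice : Tendsto (fun s : ℂ => ((0 : ℂ), s)) (𝓝 0) (𝓝 (0, 0)) :=
        Continuous.tendsto (by fun_prop) 0
      filter_upwards [hslice.eventually hdiff] with s hs
      exact hs.continuousAt.comp_of_eq (f := fun p : ℂ × ℂ => b + p.1 • u + p.2 • w)
        (by fun_prop) rfl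
    · exact hp.comp p.2 (f := fun s : ℂ => b + p.1 • u + s • w)
        (hasDerivAt_add_smul _ w p.2).differentiableAt
    · simpa using eventually_apply_add_smul_ne_zero hU hh hg hgh hb (hw ▸ one_ne_zero)
  refine ⟨fun τ => e.symm (b + τ • u), by simpa using hγ0, ?_, ?_⟩
  · simpa [Function.comp_def] using
      HasFDerivAt.comp_hasDerivAt_of_eq (0 : ℂ) hderiv (hasDerivAt_add_smul b u 0) (by simp)
  · filter_upwards [hzero, hP, hline.eventually hsymm] with τ ⟨s, hs, hτs⟩ hτ hdiff
    obtain ⟨hU', hsource⟩ := hPQ hτ hs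
    have hγ : e.symm (b + τ • u) = b + τ • u + s • w := by
      rw [← e.left_inv hsource, he]
      dsimp only
      rw [hgh _ hU' hτs]
      simp [hgb, hu, hw, add_assoc]
    exact ⟨hdiff.2.comp τ (hasDerivAt_add_smul b u τ).differentiableAt, by rwa [hγ], by rwa [hγ]⟩

/-- Otherwise the zero set of the Jacobian would contain a smooth curve, and `f` would be constant
along it. -/
theorem fderiv_ne_zero_of_injOn (hdim : 2 ≤ Module.finrank ℂ E) {f : E → E} {U : Set E}
    (hU : IsOpen U) (hf : DifferentiableOn ℂ f U) (hinj : InjOn f U)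
    (hsing : ∀ z ∈ U, ¬ Function.Injective (fderiv ℂ f z) → fderiv ℂ f z = 0)
    {a : E} (ha : a ∈ U) : fderiv ℂ f a ≠ 0 := by
  intro ha0
  have hnt : Nontrivial E := Module.nontrivial_of_finrank_pos (R := ℂ) (by omega)
  obtain ⟨ρ, hρ, hρU⟩ := Metric.isOpen_iff.1 hU a ha
  have hdet {z : E} (hz : z ∈ ball a ρ) (h : (fderiv ℂ f z).det = 0) : fderiv ℂ f z = 0 :=
    hsing z (hρU hz) (det_eq_zero_iff_not_injective.1 h)
  have hdeta : (fderiv ℂ f a).det = 0 := det_eq_zero_iff_not_injective.2 fun hi =>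
    (exists_ne (0 : E)).elim fun x hx => hx (hi (by simp [ha0]))
  obtain ⟨v, hv, hv0⟩ : ∃ v, a + v ∈ ball a ρ ∧ (fderiv ℂ f (a + v)).det ≠ 0 := by
    by_contra! hcon
    exact not_injOn_of_fderiv_eq_zero hρ (hf.mono hρU)
      (fun z hz => hdet hz (by simpa using hcon (z - a) (by simpa using hz))) (hinj.mono hρU)
  have hdetd := differentiableOn_det_fderiv isOpen_ball (hf.mono hρU)
  obtain ⟨g, hg, hgdet, b, hb, hdetb, hbv⟩ :=
    exists_fderiv_apply_ne_zero_of_apply_ne_zero hdetd hdeta hv hv0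
  obtain ⟨u, hu, hu0⟩ : ∃ u ∈ (fderiv ℂ g b).ker, u ≠ 0 :=
    Submodule.exists_mem_ne_zero_of_ne_bot
      (LinearMap.ker_ne_bot_of_finrank_lt (f := (fderiv ℂ g b : E →ₗ[ℂ] ℂ)) (by simp; omega))
  obtain ⟨γ, -, hγ', hγ⟩ := exists_curve_in_zeros isOpen_ball hdetd hg hgdet hb hdetb hbv hu
  have hγconst : γ =ᶠ[𝓝 0] fun _ => γ 0 :=
    eventuallyEq_const_of_fderiv_eq_zero_of_injOn hU hf hinj <|
      hγ.mono fun τ ⟨hdγ, hmem, hzero⟩ => ⟨hdγ, hρU hmem, hdet hmem hzero⟩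
  exact hu0 (by rw [← hγ'.deriv, hγconst.deriv_eq, deriv_const])

theorem exists_parametrization_levelSet {g : E → ℂ} {U : Set E} (hU : IsOpen U)
    (hg : DifferentiableOn ℂ g U) {a : E} (ha : a ∈ U) {g' : E →L[ℂ] ℂ}
    (hg' : HasFDerivAt g g' a) {w : E} (hw : g' w = 1) :
    ∃ (V : Set g'.ker) (θ : g'.ker → E), IsOpen V ∧ 0 ∈ V ∧ θ 0 = a ∧ MapsTo θ V U ∧ InjOn θ V ∧
      DifferentiableOn ℂ θ V ∧ HasFDerivAt θ g'.ker.subtypeL 0 ∧ ∀ y ∈ V, g (θ y) = g a := by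
  obtain ⟨e, he, has, hsymm, hderiv⟩ := exists_openPartialHomeomorph_straightening
    (contDiffAt_one_of_differentiableOn hU hg ha) w
  rw [hg'.fderiv] at he
  have hea : e a = a := by simp [he]
  have hsymm_a : e.symm a = a := by simpa only [hea] using e.left_inv has
  have hmemU : ∀ᶠ y in 𝓝 a, e.symm y ∈ U :=
    hderiv.continuousAt.eventually (by rw [hsymm_a]; exact hU.eventually_mem ha)
  obtain ⟨ρ, hρ, hball⟩ := Metric.eventually_nhds_iff_ball.1 (hsymm.and hmemU)
  have hincl (y : g'.ker) :
      HasFDerivAt (fun y : g'.ker => a + (y : E)) g'.ker.subtypeL y :=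
    g'.ker.subtypeL.hasFDerivAt.const_add a
  refine ⟨(fun y : g'.ker => a + (y : E)) ⁻¹' ball a ρ, fun y => e.symm (a + y),
    isOpen_ball.preimage (by fun_prop), by simp [hρ], by simpa, fun y hy => (hball _ hy).2,
    fun y hy y' hy' hyy => ?_, fun y hy => ?_, ?_, fun y hy => ?_⟩
  · exact Subtype.ext (add_left_cancel (e.symm.injOn (hball _ hy).1.1 (hball _ hy').1.1 hyy))
  · exact ((hball _ hy).1.2.comp y (hincl y).differentiableAt).differentiableWithinAt
  · exact HasFDerivAt.comp (0 : g'.ker) (by simpa using hderiv) (hincl 0)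
  · have hinv := congrArg (fun z => g' (z - a)) (e.right_inv (hball _ hy).1.1)
    have hyker : g' y = 0 := y.2
    simpa [he, hw, hyker, add_sub_right_comm, sub_eq_zero] using hinv

theorem exists_injOn_ker_of_injOn {f : E → E} {U : Set E} (hU : IsOpen U)
    (hf : DifferentiableOn ℂ f U) (hinj : InjOn f U) {a : E} (ha : a ∈ U) {ℓ : E →L[ℂ] ℂ} {w : E}
    (hw : ℓ (fderiv ℂ f a w) = 1) :
    ∃ (V : Set (ℓ ∘L fderiv ℂ f a).ker) (φ : (ℓ ∘L fderiv ℂ f a).ker → ℓ.ker),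
      IsOpen V ∧ 0 ∈ V ∧ DifferentiableOn ℂ φ V ∧ InjOn φ V ∧
      ∀ y : (ℓ ∘L fderiv ℂ f a).ker, fderiv ℂ f a y = 0 → fderiv ℂ φ 0 y = 0 := by
  have hfa := (hf.differentiableAt (hU.mem_nhds ha)).hasFDerivAt
  obtain ⟨V, θ, hV, h0V, hθ0, hθU, hθinj, hθ, hθ', hlevel⟩ := exists_parametrization_levelSet hU
    (ℓ.differentiable.comp_differentiableOn hf) ha (ℓ.hasFDerivAt.comp a hfa) hw
  let P : E →L[ℂ] ℓ.ker := (ContinuousLinearMap.id ℂ E - ℓ.smulRight (fderiv ℂ f a w)).codRestrict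
    ℓ.ker (fun x => by simp [LinearMap.mem_ker, hw])
  have hP {y} (hy : y ∈ V) : (P (f (θ y) - f a) : E) = f (θ y) - f a := by
    have hℓ : ℓ (f (θ y)) = ℓ (f a) := hlevel y hy
    simp [P, hℓ]
  refine ⟨V, fun y => P (f (θ y) - f a), hV, h0V, fun y hy => ?_, fun y hy y' hy' hyy => ?_,
    fun y hy => ?_⟩
  · exact (P.differentiableAt.comp_differentiableWithinAt y
      (((hf _ (hθU hy)).comp y (hθ y hy) hθU).sub_const (f a)))
  · have hval := congrArg Subtype.val hyy
    rw [hP hy, hP hy', sub_left_inj] at hval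
    exact hθinj hy hy' (hinj (hθU hy) (hθU hy') hval)
  · have hφ' := P.hasFDerivAt.comp (0 : (ℓ ∘L fderiv ℂ f a).ker)
      ((HasFDerivAt.comp 0 (hθ0.symm ▸ hfa) hθ').sub_const (f a))
    calc _ = P (fderiv ℂ f (θ 0) y) := congrArg (· y) hφ'.fderiv
      _ = 0 := by rw [hθ0, hy, map_zero]

theorem finrank_ker_add_one_of_apply_eq_one {ℓ : E →L[ℂ] ℂ} {x : E} (hx : ℓ x = 1) :
    Module.finrank ℂ ℓ.ker + 1 = Module.finrank ℂ E :=
  Module.Dual.finrank_ker_add_one_of_ne_zero (f := (ℓ : E →ₗ[ℂ] ℂ)) fun h => by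
    simpa [hx] using LinearMap.congr_fun h x

theorem fderiv_ne_zero_of_injOn_of_finrank_eq_one (hdim : Module.finrank ℂ E = 1) {f : E → E}
    {U : Set E} (hU : IsOpen U) (hf : DifferentiableOn ℂ f U) (hinj : InjOn f U) {a : E}
    (ha : a ∈ U) : fderiv ℂ f a ≠ 0 := by
  intro h0
  let e : ℂ ≃L[ℂ] E := ContinuousLinearEquiv.ofFinrankEq (by simpa using hdim.symm)
  have hd : DifferentiableOn ℂ (fun s => e.symm (f (e s))) (e ⁻¹' U) :=
    e.symm.differentiable.comp_differentiableOn
      (hf.comp e.differentiable.differentiableOn fun s hs => hs)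
  refine deriv_ne_zero_of_injOn (hU.preimage e.continuous) hd
    (fun s hs t ht hst => e.injective (hinj hs ht (e.symm.injective hst)))
    (a := e.symm a) (by simpa using ha) ?_
  have hfa : HasFDerivAt f (0 : E →L[ℂ] E) (e (e.symm a)) := by
    rw [e.apply_symm_apply, ← h0]
    exact (hf.differentiableAt (hU.mem_nhds ha)).hasFDerivAt
  have hcomp := e.symm.hasFDerivAt.comp (e.symm a) (hfa.comp (e.symm a) e.hasFDerivAt)
  simpa [Function.comp_def] using hcomp.hasDerivAt.deriv

/-- **Osgood's theorem**, by induction on the dimension: where the derivative does not vanish, `f`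
restricts to an injective holomorphic map between hypersurfaces. -/
theorem injective_fderiv_of_injOn {f : E → E} {U : Set E} (hU : IsOpen U)
    (hf : DifferentiableOn ℂ f U) (hinj : InjOn f U) {a : E} (ha : a ∈ U) :
    Function.Injective (fderiv ℂ f a) := by
  induction hn : Module.finrank ℂ E using Nat.strong_induction_on generalizing E with
  | _ n ih =>
  have hreg : ∀ z ∈ U, fderiv ℂ f z ≠ 0 → Function.Injective (fderiv ℂ f z) := by
    intro z hz hne
    obtain ⟨w₀, hw₀⟩ := DFunLike.ne_iff.1 hne
    obtain ⟨ℓ, hℓ⟩ : ∃ ℓ : E →L[ℂ] ℂ, ℓ (fderiv ℂ f z w₀) = 1 :=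
      SeparatingDual.exists_eq_one hw₀
    obtain ⟨V, φ, hV, h0V, hφ, hφinj, hker⟩ := exists_injOn_ker_of_injOn hU hf hinj hz hℓ
    have hrank := finrank_ker_add_one_of_apply_eq_one (ℓ := ℓ ∘L fderiv ℂ f z) hℓ
    let e : ℓ.ker ≃L[ℂ] (ℓ ∘L fderiv ℂ f z).ker := ContinuousLinearEquiv.ofFinrankEq
      (by have := finrank_ker_add_one_of_apply_eq_one hℓ; omega)
    have hinj0 := ih _ (by omega) (f := e ∘ φ) hV (e.differentiable.comp_differentiableOn hφ)
      (e.injective.injOn.comp hφinj (mapsTo_univ _ _)) h0V rfl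
    rw [e.comp_fderiv] at hinj0
    refine (injective_iff_map_eq_zero _).2 fun x hx => ?_
    have hxker : x ∈ (ℓ ∘L fderiv ℂ f z).ker := by simp [LinearMap.mem_ker, hx]
    exact congrArg Subtype.val ((injective_iff_map_eq_zero _).1 hinj0 ⟨x, hxker⟩
      ((congrArg e (hker ⟨x, hxker⟩ hx)).trans e.map_zero))
  rcases lt_trichotomy n 1 with h | rfl | h
  · have : Subsingleton E := Module.finrank_zero_iff.1 (by omega : Module.finrank ℂ E = 0)
    exact Function.injective_of_subsingleton _
  · exact hreg a ha (fderiv_ne_zero_of_injOn_of_finrank_eq_one hn hU hf hinj ha)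
  · exact hreg a ha (fderiv_ne_zero_of_injOn (by omega) hU hf hinj
      (fun z hz hz' => by_contra fun hne => hz' (hreg z hz hne)) ha)

end Osgood

section Slope

variable {X F : Type*} [PseudoMetricSpace X] [NormedAddCommGroup F] [NormedSpace ℝ F]

theorem tendsto_slope_continuousMap {G : ℝ → C(X, F)} {D : ℝ → X → F} {V : C(X, F)}
    (hD : Continuous fun p : ℝ × X => D p.1 p.2)
    (hG : ∀ t x, HasDerivAt (fun t => G t x) (D t x) t) (hV : D 0 = V) :
    Tendsto (slope G 0) (𝓝[≠] 0) (𝓝 V) := by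
  rw [ContinuousMap.tendsto_iff_forall_isCompact_tendstoUniformlyOn]
  intro K hK
  have key := tendstoUniformlyOn_slope (f := fun t x => G t x) (a := -1) (b := 1) (t := 0) hK
    hD.continuousOn (fun t _ x _ => (hG t x).hasDerivWithinAt) (by norm_num)
  rw [sdiff_eq, nhdsWithin_inter_of_mem (mem_nhdsWithin_of_mem_nhds
    (Icc_mem_nhds (by norm_num) (by norm_num))), hV] at key
  exact key.congr (Eventually.of_forall fun s x _ => by simp [slope_def_module])

theorem mem_topologicalClosure_of_tendsto_slope [NormedSpace ℂ F] {S : Submodule ℂ C(X, F)}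
    {G : ℝ → C(X, F)} {V : C(X, F)} (hG : ∀ t, G t ∈ S)
    (hV : Tendsto (slope G 0) (𝓝[≠] 0) (𝓝 V)) : V ∈ S.topologicalClosure :=
  mem_closure_of_tendsto hV <| Eventually.of_forall fun s => by
    rw [slope_def_module]
    exact S.smul_of_tower_mem _ (S.sub_mem (hG s) (hG 0))

end Slope

section Exponentials

variable {E : Type*} [NormedAddCommGroup E] [NormedSpace ℂ E]

theorem tendstoUniformlyOn_taylorSeries_along_lines [ProperSpace E] {g : E → ℂ}
    (hg : Differentiable ℂ g) {K : Set E} (hK : IsCompact K) :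
    TendstoUniformlyOn
      (fun N w => ∑ k ∈ Finset.range N,
        (k.factorial : ℂ)⁻¹ * iteratedDeriv k (fun s : ℂ => g (s • w)) 0) g atTop K := by
  obtain ⟨M, hM⟩ := ((isCompact_closedBall (0 : ℂ) 2).prod hK).exists_bound_of_continuousOn
    (hg.continuous.comp (by fun_prop : Continuous fun p : ℂ × E => p.1 • p.2)).continuousOn
  have hdiff (w : E) : Differentiable ℂ fun s : ℂ => g (s • w) := by fun_prop
  refine (tendstoUniformlyOn_tsum_nat (u := fun k => M * (1 / 2) ^ k)
    (summable_geometric_two.mul_left M) fun k w hw => ?_).congr_right fun w _ => ?_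
  · have hcauchy := Complex.norm_iteratedDeriv_le_of_forall_mem_sphere_norm_le k two_pos
      (hdiff w).diffContOnCl fun s hs => hM (s, w) ⟨sphere_subset_closedBall hs, hw⟩
    rw [norm_mul, norm_inv, Complex.norm_natCast, inv_mul_le_iff₀ (by positivity)]
    refine hcauchy.trans_eq ?_
    rw [one_div, inv_pow]
    ring
  · simpa using Complex.taylorSeries_eq_of_entire' 0 1 (hdiff w)

theorem contDiff_of_differentiable [FiniteDimensional ℂ E] {F : Type*} [NormedAddCommGroup F]
    [NormedSpace ℂ F] [CompleteSpace F] (n : ℕ) {f : E → F}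
    (hf : Differentiable ℂ f) : ContDiff ℂ n f := by
  induction n generalizing f with
  | zero => exact contDiff_zero.2 hf.continuous
  | succ n ih =>
    rw [Nat.cast_succ, contDiff_succ_iff_fderiv_apply]
    exact ⟨hf, by simp, fun v => ih <| differentiableOn_univ.1 <|
      differentiableOn_fderiv_apply isOpen_univ hf.differentiableOn v⟩

theorem iteratedDeriv_apply_smul_zero [FiniteDimensional ℂ E] {g : E → ℂ}
    (hg : Differentiable ℂ g) (k : ℕ) (w : E) :
    iteratedDeriv k (fun s : ℂ => g (s • w)) 0 = iteratedFDeriv ℂ k g 0 fun _ => w := by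
  rw [iteratedDeriv_eq_iteratedFDeriv]
  have := (ContinuousLinearMap.toSpanSingleton ℂ w).iteratedFDeriv_comp_right
    (contDiff_of_differentiable k hg) 0 le_rfl
  simpa [Function.comp_def] using DFunLike.congr_fun this fun _ => 1

/-- The exponential `exp ∘ ℓ` of a linear functional, as a continuous function on `E`. -/
noncomputable def expFunctional (ℓ : E →L[ℂ] ℂ) : C(E, ℂ) :=
  ⟨fun w => Complex.exp (ℓ w), by fun_prop⟩

variable (E) in
/-- The linear span of the functions `exp ∘ ℓ`, as a subalgebra of `C(E, ℂ)` in the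
compact-open topology. -/
noncomputable def expAlgebra : Subalgebra ℂ C(E, ℂ) := Algebra.adjoin ℂ (range expFunctional)

theorem toSubmodule_expAlgebra :
    Subalgebra.toSubmodule (expAlgebra E) = Submodule.span ℂ (range expFunctional) := by
  refine Algebra.adjoin_eq_span_of_subset _ fun f hf => Submodule.subset_span ?_
  induction hf using Submonoid.closure_induction with
  | mem _ hf => exact hf
  | one => exact ⟨0, by ext; simp [expFunctional]⟩
  | mul f g _ _ hf hg =>
    obtain ⟨⟨ℓ, rfl⟩, m, rfl⟩ := hf, hg
    exact ⟨ℓ + m, by ext; simp [expFunctional, Complex.exp_add]⟩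

theorem clm_mem_topologicalClosure_expAlgebra [ProperSpace E] (ℓ : E →L[ℂ] ℂ) :
    (ℓ : C(E, ℂ)) ∈ (expAlgebra E).topologicalClosure := by
  refine mem_topologicalClosure_of_tendsto_slope (S := Subalgebra.toSubmodule (expAlgebra E))
    (G := fun s => expFunctional ((s : ℂ) • ℓ)) (fun s => Algebra.subset_adjoin ⟨_, rfl⟩) <|
    tendsto_slope_continuousMap (D := fun s w => Complex.exp (s * ℓ w) * ℓ w) (V := (ℓ : C(E, ℂ)))
      (by fun_prop) (fun s w => ?_) (by ext; simp)
  simpa [expFunctional] using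
    (((hasDerivAt_id s).ofReal_comp).mul_const (ℓ w)).cexp

theorem multilinear_mem_topologicalClosure_expAlgebra [ProperSpace E] {k : ℕ}
    (m : E [×k]→L[ℂ] ℂ) :
    (⟨fun w => m fun _ => w, by fun_prop⟩ : C(E, ℂ)) ∈ (expAlgebra E).topologicalClosure := by
  have := FiniteDimensional.of_locallyCompactSpace ℂ (E := E)
  let b := Module.finBasis ℂ E
  let c (i : Fin (Module.finrank ℂ E)) : C(E, ℂ) := (b.coord i).toContinuousLinearMap
  have hexpand : (⟨fun w => m fun _ => w, by fun_prop⟩ : C(E, ℂ)) =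
      ∑ r : Fin k → Fin (Module.finrank ℂ E), m (b ∘ r) • ∏ i, c (r i) := by
    ext w
    calc m (fun _ => w) = m fun _ => ∑ j, b.repr w j • b j := by rw [b.sum_repr]
      _ = ∑ r : Fin k → _, m fun i => b.repr w (r i) • b (r i) := m.map_sum _
      _ = _ := by simp [m.map_smul_univ, c, mul_comm, Function.comp_def]
  rw [hexpand]
  exact sum_mem fun r _ => Subalgebra.smul_mem _ (prod_mem fun i _ =>
    clm_mem_topologicalClosure_expAlgebra _) _

theorem entire_mem_topologicalClosure_expAlgebra [ProperSpace E] {g : C(E, ℂ)}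
    (hg : Differentiable ℂ g) : g ∈ (expAlgebra E).topologicalClosure := by
  have := FiniteDimensional.of_locallyCompactSpace ℂ (E := E)
  let P (N : ℕ) : C(E, ℂ) := ∑ k ∈ Finset.range N, (k.factorial : ℂ)⁻¹ •
    ⟨fun w => iteratedFDeriv ℂ k g 0 fun _ => w, by fun_prop⟩
  have hP : Tendsto P atTop (𝓝 g) := by
    rw [ContinuousMap.tendsto_iff_forall_isCompact_tendstoUniformlyOn]
    intro K hK
    refine (tendstoUniformlyOn_taylorSeries_along_lines hg hK).congr <|
      Eventually.of_forall fun N w _ => ?_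
    simp [P, iteratedDeriv_apply_smul_zero hg]
  exact (expAlgebra E).isClosed_topologicalClosure.mem_of_tendsto hP <| Eventually.of_forall
    fun N => sum_mem fun k _ => Subalgebra.smul_mem _
      (multilinear_mem_topologicalClosure_expAlgebra _) _

end Exponentials

section ShearFields

variable {E : Type*} [NormedAddCommGroup E] [NormedSpace ℂ E]

variable (E) in
/-- The shear fields `w ↦ f (ℓ w) • v` with `ℓ v = 0` and `f` entire. -/
def shearFields : Set C(E, E) :=
  {V | ∃ (f : ℂ → ℂ) (ℓ : E →L[ℂ] ℂ) (v : E),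
    Differentiable ℂ f ∧ ℓ v = 0 ∧ ∀ w, V w = f (ℓ w) • v}

variable (E) in
/-- The overshear fields `w ↦ (f (ℓ w) * m w) • v` with `ℓ v = 0`, `m v = 1` and `f` entire. -/
def overshearFields : Set C(E, E) :=
  {V | ∃ (f : ℂ → ℂ) (ℓ m : E →L[ℂ] ℂ) (v : E),
    Differentiable ℂ f ∧ ℓ v = 0 ∧ m v = 1 ∧ ∀ w, V w = (f (ℓ w) * m w) • v}

variable (E) in
/-- The complex span of the shear and overshear fields. -/
def shearSpan : Submodule ℂ C(E, E) := Submodule.span ℂ (shearFields E ∪ overshearFields E)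

/-- The field `w ↦ h w • v` in the fixed direction `v`, as a continuous linear function of `h`. -/
noncomputable def fieldInDirection (v : E) : C(E, ℂ) →L[ℂ] C(E, E) :=
  (ContinuousLinearMap.toSpanSingleton ℂ v).compLeftContinuous ℂ E

theorem fieldInDirection_apply (v : E) (h : C(E, ℂ)) (w : E) : fieldInDirection v h w = h w • v :=
  rfl

theorem exists_dual_pair_of_apply_ne_zero (hn : 2 ≤ Module.finrank ℂ E) {ℓ : E →L[ℂ] ℂ} {v : E}
    (hv : ℓ v ≠ 0) : ∃ (m : E →L[ℂ] ℂ) (u : E), ℓ u = 0 ∧ m v = 0 ∧ m u = 1 := by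
  have : FiniteDimensional ℂ E := Module.finite_of_finrank_pos (by omega)
  obtain ⟨u, hu, hu0⟩ := Submodule.exists_mem_ne_zero_of_ne_bot
    (LinearMap.ker_ne_bot_of_finrank_lt (f := (ℓ : E →ₗ[ℂ] ℂ)) (by rw [Module.finrank_self]; omega))
  replace hu : ℓ u = 0 := hu
  obtain ⟨φ, hφ⟩ := SeparatingDual.exists_eq_one (R := ℂ) hu0
  exact ⟨φ - (φ v / ℓ v) • ℓ, u, hu, by simp [hv], by simp [hu, hφ]⟩

/-- If `ℓ v ≠ 0`, choose `m` and `u` dual to `ℓ` and `v`. The `τ`-derivative at `0` of the shear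
fields `exp (ℓ + τ m) • (τ • v - ℓ v • u)` is `exp ℓ • v` minus an overshear field. -/
theorem fieldInDirection_expFunctional_mem (hn : 2 ≤ Module.finrank ℂ E) (ℓ : E →L[ℂ] ℂ) (v : E) :
    fieldInDirection v (expFunctional ℓ) ∈ (shearSpan E).topologicalClosure := by
  by_cases hv : ℓ v = 0
  · exact subset_closure (Submodule.subset_span (.inl ⟨Complex.exp, ℓ, v, by fun_prop, hv,
      fun w => rfl⟩))
  obtain ⟨m, u, hu, hmv, hmu⟩ := exists_dual_pair_of_apply_ne_zero hn hv
  let O : C(E, E) := ⟨fun w => (ℓ v * Complex.exp (ℓ w) * m w) • u, by fun_prop⟩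
  have hO : O ∈ shearSpan E := Submodule.subset_span
    (.inr ⟨fun z => ℓ v * Complex.exp z, ℓ, m, u, by fun_prop, hu, hmu, fun w => rfl⟩)
  let u' (τ : ℝ) : E := (τ : ℂ) • v - ℓ v • u
  let G (τ : ℝ) : C(E, E) := fieldInDirection (u' τ) (expFunctional (ℓ + (τ : ℂ) • m))
  have hG (τ : ℝ) : G τ ∈ shearSpan E := Submodule.subset_span
    (.inl ⟨Complex.exp, ℓ + (τ : ℂ) • m, u' τ, by fun_prop,
      by simp [u', hu, hmv, hmu, mul_comm], fun w => rfl⟩)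
  have hderiv (τ : ℝ) (w : E) : HasDerivAt (fun τ => G τ w)
      (Complex.exp (ℓ w + τ * m w) • v + (Complex.exp (ℓ w + τ * m w) * m w) • u' τ) τ := by
    have hτ : HasDerivAt (fun τ : ℝ => (τ : ℂ)) 1 τ := Complex.ofRealCLM.hasDerivAt
    have hexp := ((hτ.mul_const (m w)).const_add (ℓ w)).cexp
    convert hexp.fun_smul ((hτ.smul_const v).sub_const (ℓ v • u)) using 1
    · ext τ
      simp [G, u', fieldInDirection_apply, expFunctional]
    · simp [u']
  have hlim : fieldInDirection v (expFunctional ℓ) - O ∈ (shearSpan E).topologicalClosure := by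
    refine mem_topologicalClosure_of_tendsto_slope hG
      (tendsto_slope_continuousMap (by fun_prop) hderiv ?_)
    ext w
    simp [u', O, fieldInDirection_apply, expFunctional, smul_smul, sub_eq_add_neg, mul_comm,
      mul_left_comm]
  simpa using add_mem hlim (Submodule.le_topologicalClosure _ hO)

theorem fieldInDirection_mem_of_mem_topologicalClosure_expAlgebra [ProperSpace E]
    (hn : 2 ≤ Module.finrank ℂ E) {h : C(E, ℂ)} (hh : h ∈ (expAlgebra E).topologicalClosure)
    (v : E) : fieldInDirection v h ∈ (shearSpan E).topologicalClosure := by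
  refine closure_minimal (t := fieldInDirection v ⁻¹' _) (fun h hh => ?_)
    ((shearSpan E).isClosed_topologicalClosure.preimage (fieldInDirection v).continuous) hh
  replace hh : h ∈ Submodule.span ℂ (range expFunctional) := toSubmodule_expAlgebra (E := E) ▸ hh
  refine (Submodule.span_le (p := (shearSpan E).topologicalClosure.comap
    (fieldInDirection v : C(E, ℂ) →ₗ[ℂ] C(E, E)))).2 ?_ hh
  rintro _ ⟨ℓ, rfl⟩
  exact fieldInDirection_expFunctional_mem hn ℓ v

theorem entire_mem_topologicalClosure_shearSpan (hn : 2 ≤ Module.finrank ℂ E)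
    {g : C(E, E)} (hg : Differentiable ℂ g) : g ∈ (shearSpan E).topologicalClosure := by
  have : FiniteDimensional ℂ E := Module.finite_of_finrank_pos (by omega)
  have : ProperSpace E := FiniteDimensional.proper ℂ E
  let b := Module.finBasis ℂ E
  let c (i) : E →L[ℂ] ℂ := (b.coord i).toContinuousLinearMap
  have hsum : g = ∑ i, fieldInDirection (b i) ((c i : C(E, ℂ)).comp g) := by
    ext w
    simp [c, fieldInDirection_apply]
  rw [hsum]
  exact sum_mem fun i _ => fieldInDirection_mem_of_mem_topologicalClosure_expAlgebra hn
    (entire_mem_topologicalClosure_expAlgebra ((c i).differentiable.comp hg)) (b i)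

end ShearFields

section AutomorphismIsotopies

variable {n : ℕ}

local notation "ℂⁿ" => EuclideanSpace ℂ (Fin n)

theorem isHolomorphicAutomorphism_id : IsHolomorphicAutomorphism (id : ℂⁿ → ℂⁿ) :=
  ⟨differentiable_id, id, differentiable_id, fun _ => rfl, fun _ => rfl⟩

theorem IsHolomorphicAutomorphism.comp {f g : ℂⁿ → ℂⁿ}
    (hf : IsHolomorphicAutomorphism f) (hg : IsHolomorphicAutomorphism g) :
    IsHolomorphicAutomorphism (f ∘ g) := by
  obtain ⟨hf, f', hf', hl, hr⟩ := hf
  obtain ⟨hg, g', hg', hl', hr'⟩ := hg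
  exact ⟨hf.comp hg, g' ∘ f', hg'.comp hf', hl.comp hl', hr.comp hr'⟩

/-- A path of holomorphic automorphisms of `ℂⁿ` starting at the identity, continuous in the
compact-open topology. -/
structure IsAutIsotopy (A : ℝ → C(ℂⁿ, ℂⁿ)) : Prop where
  protected continuous : Continuous A
  zero : A 0 = ContinuousMap.id _
  isHolomorphicAutomorphism : ∀ s, IsHolomorphicAutomorphism (A s)

/-- The field `V` is the velocity at time `0` of a path of holomorphic automorphisms of `ℂⁿ`
starting at the identity. -/
def IsAutTangent (V : C(ℂⁿ, ℂⁿ)) : Prop :=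
  ∃ A : ℝ → C(ℂⁿ, ℂⁿ), IsAutIsotopy A ∧ Tendsto (slope A 0) (𝓝[≠] 0) (𝓝 V)

theorem isAutIsotopy_const_id : IsAutIsotopy fun _ => ContinuousMap.id ℂⁿ :=
  ⟨continuous_const, rfl, fun _ => isHolomorphicAutomorphism_id⟩

theorem IsAutIsotopy.comp {A B : ℝ → C(ℂⁿ, ℂⁿ)} (hA : IsAutIsotopy A) (hB : IsAutIsotopy B)
    {σ τ : ℝ → ℝ} (hσ : Continuous σ) (hτ : Continuous τ) (hσ0 : σ 0 = 0) (hτ0 : τ 0 = 0) :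
    IsAutIsotopy fun s => (A (σ s)).comp (B (τ s)) where
  continuous := (hA.continuous.comp hσ).compCM (hB.continuous.comp hτ)
  zero := by simp [hA.zero, hB.zero, hσ0, hτ0]
  isHolomorphicAutomorphism s :=
    (hA.isHolomorphicAutomorphism _).comp (hB.isHolomorphicAutomorphism _)

theorem isAutTangent_zero : IsAutTangent (0 : C(ℂⁿ, ℂⁿ)) :=
  ⟨_, isAutIsotopy_const_id, tendsto_const_nhds.congr fun s => by simp [slope_def_module]⟩

theorem IsAutTangent.add {V W : C(ℂⁿ, ℂⁿ)} (hV : IsAutTangent V) (hW : IsAutTangent W) :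
    IsAutTangent (V + W) := by
  obtain ⟨A, hA, hAV⟩ := hV
  obtain ⟨B, hB, hBW⟩ := hW
  refine ⟨_, hA.comp hB continuous_id continuous_id rfl rfl, ?_⟩
  have hslope (s : ℝ) : slope (fun s => (A s).comp (B s)) 0 s
      = (slope A 0 s).comp (B s) + slope B 0 s := by
    ext1 w
    simp [slope_def_module, hA.zero, hB.zero, ← smul_add]
  have hB0 : Tendsto B (𝓝[≠] 0) (𝓝 (ContinuousMap.id _)) :=
    hB.zero ▸ hB.continuous.continuousAt.tendsto.mono_left nhdsWithin_le_nhds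
  exact ((hAV.compCM hB0).add hBW).congr fun s => (hslope s).symm

theorem isAutTangent_of_hasDerivAt {A D : ℝ → ℂⁿ → ℂⁿ} {V : C(ℂⁿ, ℂⁿ)}
    (hAc : Continuous fun p : ℝ × ℂⁿ => A p.1 p.2) (hA0 : A 0 = id)
    (hAaut : ∀ s, IsHolomorphicAutomorphism (A s))
    (hD : Continuous fun p : ℝ × ℂⁿ => D p.1 p.2)
    (hA : ∀ s w, HasDerivAt (fun s => A s w) (D s w) s) (hV : D 0 = V) : IsAutTangent V :=
  ⟨fun s => ⟨A s, hAc.comp (.prodMk_right s)⟩,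
    ⟨ContinuousMap.continuous_of_continuous_uncurry _ hAc, by ext1; simp [hA0], hAaut⟩,
    tendsto_slope_continuousMap hD hA hV⟩

theorem isAutTangent_of_mem_shearFields {V : C(ℂⁿ, ℂⁿ)} (hV : V ∈ shearFields ℂⁿ) :
    IsAutTangent V := by
  obtain ⟨f, ℓ, v, hf, hv, hV⟩ := hV
  have hfc := hf.continuous
  let A (s : ℝ) (w : ℂⁿ) : ℂⁿ := w + ((s : ℂ) * f (ℓ w)) • v
  have hdiff (s : ℝ) : Differentiable ℂ (A s) := by fun_prop
  have hinv (s : ℝ) (w : ℂⁿ) : A (-s) (A s w) = w := by simp [A, hv]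
  refine isAutTangent_of_hasDerivAt (A := A) (D := fun _ w => f (ℓ w) • v) (by fun_prop)
    (by ext1; simp [A]) (fun s => ⟨hdiff s, A (-s), hdiff (-s), hinv s,
      fun w => by simpa using hinv (-s) w⟩) (by fun_prop) (fun s w => ?_)
    (by ext1 w; exact (hV w).symm)
  have hs : HasDerivAt (fun s : ℝ => (s : ℂ)) 1 s := Complex.ofRealCLM.hasDerivAt
  simpa [A] using ((hs.mul_const (f (ℓ w))).smul_const v).const_add w

theorem isAutTangent_of_mem_overshearFields {V : C(ℂⁿ, ℂⁿ)} (hV : V ∈ overshearFields ℂⁿ) :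
    IsAutTangent V := by
  obtain ⟨f, ℓ, m, v, hf, hv, hm, hV⟩ := hV
  have hfc := hf.continuous
  let A (s : ℝ) (w : ℂⁿ) : ℂⁿ := w + ((Complex.exp (s * f (ℓ w)) - 1) * m w) • v
  have hdiff (s : ℝ) : Differentiable ℂ (A s) := by fun_prop
  have hℓ (s : ℝ) (w : ℂⁿ) : ℓ (A s w) = ℓ w := by simp [A, hv]
  have hm (s : ℝ) (w : ℂⁿ) : m (A s w) = Complex.exp (s * f (ℓ w)) * m w := by
    simp [A, hm]
    ring
  have hinv (s : ℝ) (w : ℂⁿ) : A (-s) (A s w) = w := by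
    calc A (-s) (A s w)
        = A s w + ((Complex.exp (((-s : ℝ) : ℂ) * f (ℓ (A s w))) - 1) * m (A s w)) • v := rfl
      _ = w + ((Complex.exp (-(s * f (ℓ w))) * Complex.exp (s * f (ℓ w)) - 1) * m w) • v := by
          rw [hℓ, hm, add_assoc, ← add_smul]
          push_cast
          ring_nf
      _ = w := by simp [← Complex.exp_add]
  refine isAutTangent_of_hasDerivAt (A := A)
    (D := fun s w => (Complex.exp (s * f (ℓ w)) * f (ℓ w) * m w) • v) (by fun_prop)
    (by ext1; simp [A]) (fun s => ⟨hdiff s, A (-s), hdiff (-s), hinv s,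
      fun w => by simpa using hinv (-s) w⟩) (by fun_prop) (fun s w => ?_)
    (by ext1 w; simp [hV])
  have hs : HasDerivAt (fun s : ℝ => (s : ℂ)) 1 s := Complex.ofRealCLM.hasDerivAt
  simpa [A] using
    ((((hs.mul_const (f (ℓ w))).cexp.sub_const 1).mul_const (m w)).smul_const v).const_add w

theorem isAutTangent_of_mem_shearSpan {V : C(ℂⁿ, ℂⁿ)} (hV : V ∈ shearSpan ℂⁿ) :
    IsAutTangent V := by
  induction hV using Submodule.closure_induction with
  | zero => exact isAutTangent_zero
  | add V W _ _ hV hW => exact hV.add hW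
  | smul_mem r V hV =>
    rcases hV with ⟨f, ℓ, v, hf, hv, hV⟩ | ⟨f, ℓ, m, v, hf, hv, hm, hV⟩
    · exact isAutTangent_of_mem_shearFields
        ⟨fun z => r * f z, ℓ, v, hf.const_mul r, hv, fun w => by simp [hV, smul_smul]⟩
    · exact isAutTangent_of_mem_overshearFields ⟨fun z => r * f z, ℓ, m, v, hf.const_mul r, hv, hm,
        fun w => by simp [hV, smul_smul, mul_assoc]⟩

theorem exists_isAutIsotopy_norm_sub_le (hn : 2 ≤ n) {g : C(ℂⁿ, ℂⁿ)} (hg : Differentiable ℂ g)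
    {K : Set ℂⁿ} (hK : IsCompact K) {ε : ℝ} (hε : 0 < ε) :
    ∃ A, IsAutIsotopy A ∧ ∃ δ > 0, ∀ s ∈ Ico 0 δ, ∀ w ∈ K, ‖A s w - w - s • g w‖ ≤ ε * s := by
  have hmem : g ∈ closure (shearSpan ℂⁿ : Set C(ℂⁿ, ℂⁿ)) :=
    entire_mem_topologicalClosure_shearSpan (by simpa using hn) hg
  have hnear : ∀ᶠ V in 𝓝 g, ∀ w ∈ K, dist (g w) (V w) < ε :=
    Metric.tendstoUniformlyOn_iff.1
      (ContinuousMap.tendsto_iff_forall_isCompact_tendstoUniformlyOn.1 tendsto_id K hK) ε hε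
  obtain ⟨V, hV, hVnear⟩ := ((mem_closure_iff_frequently.1 hmem).and_eventually
    (eventually_eventually_nhds.2 hnear)).exists
  obtain ⟨A, hA, hAV⟩ := isAutTangent_of_mem_shearSpan hV
  obtain ⟨δ, hδ, H⟩ := Metric.eventually_nhds_iff.1
    (eventually_nhdsWithin_iff.1 (hAV.eventually hVnear))
  refine ⟨A, hA, δ, hδ, fun s hs w hw => ?_⟩
  rcases hs.1.eq_or_lt with rfl | hs0
  · simp [hA.zero]
  have hslope := H (by simpa [abs_of_pos hs0] using hs.2) hs0.ne' w hw
  have hscale : A s w - w - s • g w = s • (slope A 0 s w - g w) := by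
    simp [slope_def_module, hA.zero, smul_sub, smul_inv_smul₀ hs0.ne']
  rw [hscale, norm_smul, Real.norm_of_nonneg hs0.le, mul_comm, ← dist_eq_norm, dist_comm]
  gcongr

end AutomorphismIsotopies

section Isotopies

variable {E F : Type*} [NormedAddCommGroup E] [NormedSpace ℂ E] [FiniteDimensional ℂ E]
  [NormedAddCommGroup F] [NormedSpace ℂ F]

theorem exists_continuousLinearEquiv_fderiv_of_injOn {f : E → E} {U : Set E} (hU : IsOpen U)
    (hf : DifferentiableOn ℂ f U) (hinj : InjOn f U) {a : E} (ha : a ∈ U) :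
    ∃ A : E ≃L[ℂ] E, (A : E →L[ℂ] E) = fderiv ℂ f a :=
  ⟨(LinearEquiv.ofInjectiveEndo (fderiv ℂ f a : E →ₗ[ℂ] E)
    (injective_fderiv_of_injOn hU hf hinj ha)).toContinuousLinearEquiv, by ext1; rfl⟩

theorem differentiableOn_invFunOn_of_injOn {f : E → E} {U : Set E} (hU : IsOpen U)
    (hf : DifferentiableOn ℂ f U) (hinj : InjOn f U) :
    DifferentiableOn ℂ (Function.invFunOn f U) (f '' U) := by
  rintro _ ⟨z, hz, rfl⟩
  have : CompleteSpace E := FiniteDimensional.complete ℂ E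
  obtain ⟨A, hA⟩ := exists_continuousLinearEquiv_fderiv_of_injOn hU hf hinj hz
  have hstrict : HasStrictFDerivAt f (A : E →L[ℂ] E) z :=
    hA ▸ (contDiffAt_one_of_differentiableOn hU hf hz).hasStrictFDerivAt one_ne_zero
  have hli := hstrict.to_localInverse
  have hmem : ∀ᶠ w in 𝓝 (f z), hstrict.localInverse f A z w ∈ U :=
    hli.continuousAt.eventually_mem
      (by simpa only [hstrict.localInverse_apply_image] using hU.mem_nhds hz)
  refine (hli.hasFDerivAt.congr_of_eventuallyEq ?_).differentiableAt.differentiableWithinAt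
  filter_upwards [hmem, hstrict.eventually_right_inverse] with w hw hfw
  have himage : w ∈ f '' U := ⟨_, hw, hfw⟩
  exact hinj (Function.invFunOn_mem himage) hw ((Function.invFunOn_eq himage).trans hfw.symm)

theorem exists_mem_ball_eq_of_norm_fderiv_sub_le {f : E → F} {A : E ≃L[ℂ] F} {z : E} {w : F}
    {c r : ℝ} (hc : 0 < c) (hA : ∀ x, 2 * c * ‖x‖ ≤ ‖A x‖) (hf : DifferentiableOn ℂ f (ball z r))
    (hfd : ∀ x ∈ ball z r, ‖fderiv ℂ f x - A‖ ≤ c) (hw : ‖w - f z‖ < c * r) :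
    ∃ z' ∈ ball z r, f z' = w ∧ c * ‖z' - z‖ ≤ ‖w - f z‖ := by
  have : CompleteSpace E := FiniteDimensional.complete ℂ E
  lift c to NNReal using hc.le
  have happrox : ApproximatesLinearOn f (A : E →L[ℂ] F) (ball z r) c := fun x hx y hy =>
    (convex_ball z r).norm_image_sub_le_of_norm_fderiv_le' (𝕜 := ℂ)
      (fun u hu => hf.differentiableAt (isOpen_ball.mem_nhds hu)) hfd hy hx
  let Ainv : (A : E →L[ℂ] F).NonlinearRightInverse :=
    { toFun := A.symm
      nnnorm := (2 * c)⁻¹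
      bound' := fun y => by
        have := hA (A.symm y)
        rw [A.apply_symm_apply] at this
        push_cast
        rwa [le_inv_mul_iff₀ (by positivity)]
      right_inv' := A.apply_symm_apply }
  have hsub : closedBall z (‖w - f z‖ / c) ⊆ ball z r :=
    closedBall_subset_ball ((div_lt_iff₀' hc).2 hw)
  obtain ⟨z', hz', rfl⟩ : w ∈ f '' closedBall z (‖w - f z‖ / c) := by
    refine happrox.surjOn_closedBall_of_nonlinearRightInverse Ainv (by positivity) hsub ?_
    rw [mem_closedBall, dist_eq_norm]
    simp only [Ainv]
    push_cast
    refine le_of_eq ?_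
    field_simp
    ring
  exact ⟨z', hsub hz', rfl, by rwa [mem_closedBall, dist_eq_norm, le_div_iff₀' hc] at hz'⟩

theorem exists_pos_forall_of_isCompact {X : Type*} [TopologicalSpace X] {K : Set X}
    (hK : IsCompact K) {P : ℝ → X → Prop} (hanti : ∀ x, Antitone fun δ => P δ x)
    (hlocal : ∀ x ∈ K, ∃ δ > 0, ∀ᶠ y in 𝓝[K] x, P δ y) : ∃ δ > 0, ∀ x ∈ K, P δ x := by
  refine hK.induction_on (p := fun S => ∃ δ > 0, ∀ x ∈ S, P δ x) ⟨1, one_pos, by simp⟩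
    (fun S T hST ⟨δ, hδ, hT⟩ => ⟨δ, hδ, fun x hx => hT x (hST hx)⟩) ?_
    fun x hx => (hlocal x hx).elim fun δ ⟨hδ, h⟩ => ⟨_, h, δ, hδ, fun y hy => hy⟩
  rintro S T ⟨δ, hδ, hS⟩ ⟨δ', hδ', hT⟩
  refine ⟨min δ δ', lt_min hδ hδ', fun x hx => hx.elim (fun hx => ?_) fun hx => ?_⟩
  · exact hanti x (min_le_left _ _) (hS x hx)
  · exact hanti x (min_le_right _ _) (hT x hx)

/-- A `C¹` isotopy of injective holomorphic maps on an open set, with time parameter in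
`[0, 1]`. -/
structure IsHolIsotopy (Ω : Set E) (Φ : ℝ → E → E) : Prop where
  isOpen : IsOpen Ω
  contDiffOn : ContDiffOn ℝ 1 (fun p : ℝ × E => Φ p.1 p.2) (Icc 0 1 ×ˢ Ω)
  differentiableOn : ∀ t ∈ Icc (0 : ℝ) 1, DifferentiableOn ℂ (Φ t) Ω
  injOn : ∀ t ∈ Icc (0 : ℝ) 1, InjOn (Φ t) Ω

namespace IsHolIsotopy

variable {Ω K : Set E} {Φ : ℝ → E → E}

theorem exists_velocity (h : IsHolIsotopy Ω Φ) :
    ∃ v : ℝ → E → E, ContinuousOn (fun p : ℝ × E => v p.1 p.2) (Icc 0 1 ×ˢ Ω) ∧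
      (∀ t ∈ Icc (0 : ℝ) 1, ∀ z ∈ Ω, HasDerivWithinAt (fun t => Φ t z) (v t z) (Icc 0 1) t) ∧
      ∀ t ∈ Icc (0 : ℝ) 1, DifferentiableOn ℂ (v t) Ω := by
  have : CompleteSpace E := FiniteDimensional.complete ℂ E
  have hunique : UniqueDiffOn ℝ (Icc (0 : ℝ) 1 ×ˢ Ω) :=
    (uniqueDiffOn_Icc zero_lt_one).prod h.isOpen.uniqueDiffOn
  let v (t : ℝ) (z : E) : E :=
    fderivWithin ℝ (fun p : ℝ × E => Φ p.1 p.2) (Icc 0 1 ×ˢ Ω) (t, z) (1, 0)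
  have hvcont : ContinuousOn (fun p : ℝ × E => v p.1 p.2) (Icc 0 1 ×ˢ Ω) :=
    (h.contDiffOn.continuousOn_fderivWithin hunique le_rfl).clm_apply continuousOn_const
  have hv : ∀ t ∈ Icc (0 : ℝ) 1, ∀ z ∈ Ω,
      HasDerivWithinAt (fun t => Φ t z) (v t z) (Icc 0 1) t := by
    intro t ht z hz
    have hmaps : MapsTo (fun s : ℝ => (s, z)) (Icc 0 1) (Icc (0 : ℝ) 1 ×ˢ Ω) :=
      fun s hs => ⟨hs, hz⟩
    exact (h.contDiffOn.differentiableOn one_ne_zero (t, z) ⟨ht, hz⟩).hasFDerivWithinAt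
      |>.comp_hasDerivWithinAt t
        ((hasDerivWithinAt_id t _).prodMk (hasDerivWithinAt_const t _ z)) hmaps
  exact ⟨v, hvcont, hv, fun t ht =>
    differentiableOn_of_hasDerivWithinAt zero_lt_one ht h.isOpen h.differentiableOn hvcont hv⟩

theorem exists_eventually_forall_exists_eq (h : IsHolIsotopy Ω Φ) {t₀ : ℝ}
    (ht₀ : t₀ ∈ Icc (0 : ℝ) 1) {z₀ : E} (hz₀ : z₀ ∈ Ω) :
    ∃ c > 0, ∀ᶠ p : ℝ × E in 𝓝[Icc 0 1 ×ˢ Ω] (t₀, z₀), ∀ w, ‖w - Φ p.1 p.2‖ ≤ c →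
      ∃ z' ∈ Ω, Φ p.1 z' = w ∧ c * ‖z' - p.2‖ ≤ ‖w - Φ p.1 p.2‖ := by
  obtain ⟨A, hA⟩ := exists_continuousLinearEquiv_fderiv_of_injOn h.isOpen
    (h.differentiableOn t₀ ht₀) (h.injOn t₀ ht₀) hz₀
  obtain ⟨c, hc, hAc⟩ : ∃ c > 0, ∀ x, 2 * c * ‖x‖ ≤ ‖A x‖ := by
    obtain ⟨C, hC, hbound⟩ := (A.symm : E →L[ℂ] E).bound
    refine ⟨C⁻¹ / 2, by positivity, fun x => ?_⟩
    rw [mul_div_cancel₀ _ two_ne_zero, inv_mul_le_iff₀ hC]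
    simpa using hbound (A x)
  obtain ⟨δ, hδ, hfderiv⟩ := Metric.continuousWithinAt_iff.1
    (continuousOn_fderiv_of_continuousOn_uncurry h.isOpen h.contDiffOn.continuousOn
      h.differentiableOn (t₀, z₀) ⟨ht₀, hz₀⟩) c hc
  obtain ⟨r, hr, hrΩ⟩ := Metric.isOpen_iff.1 h.isOpen z₀ hz₀
  obtain ⟨ρ, hρ, hρδ, hρr⟩ : ∃ ρ > 0, 2 * ρ ≤ δ ∧ 2 * ρ ≤ r :=
    ⟨min δ r / 2, by positivity, by linarith [min_le_left δ r], by linarith [min_le_right δ r]⟩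
  refine ⟨min c (c * ρ / 2), by positivity, ?_⟩
  filter_upwards [self_mem_nhdsWithin, nhdsWithin_le_nhds (ball_mem_nhds (t₀, z₀) hρ)]
  rintro ⟨t, z⟩ ⟨ht, -⟩ htz w hw
  obtain ⟨htt₀, hzz₀⟩ : dist t t₀ < ρ ∧ dist z z₀ < ρ := by
    simpa only [mem_ball, Prod.dist_eq, max_lt_iff] using htz
  have hball : ∀ x ∈ ball z ρ, dist x z₀ < 2 * ρ := fun x hx => by
    linarith [dist_triangle x z z₀, mem_ball.1 hx]
  have hballΩ : ball z ρ ⊆ Ω := fun x hx => hrΩ ((hball x hx).trans_le hρr)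
  have hnear : ∀ x ∈ ball z ρ, ‖fderiv ℂ (Φ t) x - A‖ ≤ c := fun x hx => by
    rw [hA, ← dist_eq_norm]
    refine (hfderiv (x := (t, x)) ⟨ht, hballΩ hx⟩ (max_lt ?_ ((hball x hx).trans_le hρδ))).le
    exact htt₀.trans_le (by linarith)
  obtain ⟨z', hz', hz'w, hz'z⟩ := exists_mem_ball_eq_of_norm_fderiv_sub_le hc hAc
    ((h.differentiableOn t ht).mono hballΩ) hnear
    (hw.trans_lt ((min_le_right _ _).trans_lt (half_lt_self (by positivity))))
  exact ⟨z', hballΩ hz', hz'w, le_trans (by gcongr; exact min_le_left _ _) hz'z⟩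

theorem exists_pos_forall_exists_eq (h : IsHolIsotopy Ω Φ) (hK : IsCompact K) (hKΩ : K ⊆ Ω) :
    ∃ c > 0, ∀ t ∈ Icc (0 : ℝ) 1, ∀ z ∈ K, ∀ w, ‖w - Φ t z‖ ≤ c →
      ∃ z' ∈ Ω, Φ t z' = w ∧ c * ‖z' - z‖ ≤ ‖w - Φ t z‖ := by
  let P (c : ℝ) (p : ℝ × E) : Prop :=
    ∀ w, ‖w - Φ p.1 p.2‖ ≤ c → ∃ z' ∈ Ω, Φ p.1 z' = w ∧ c * ‖z' - p.2‖ ≤ ‖w - Φ p.1 p.2‖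
  have hanti (p : ℝ × E) : Antitone fun c => P c p := fun c c' hcc' hp w hw => by
    obtain ⟨z', hz', hz'w, hle⟩ := hp w (hw.trans hcc')
    exact ⟨z', hz', hz'w, le_trans (by gcongr) hle⟩
  have hlocal : ∀ p ∈ Icc (0 : ℝ) 1 ×ˢ K, ∃ c > 0, ∀ᶠ q in 𝓝[Icc 0 1 ×ˢ K] p, P c q := by
    rintro ⟨t, z⟩ ⟨ht, hz⟩
    obtain ⟨c, hc, H⟩ := h.exists_eventually_forall_exists_eq ht (hKΩ hz)
    exact ⟨c, hc, H.filter_mono (nhdsWithin_mono _ (prod_mono_right hKΩ))⟩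
  obtain ⟨c, hc, H⟩ := exists_pos_forall_of_isCompact (isCompact_Icc.prod hK) hanti hlocal
  exact ⟨c, hc, fun t ht z hz => H (t, z) ⟨ht, hz⟩⟩

end IsHolIsotopy

end Isotopies

section EulerPolygons

variable {n : ℕ} {Ω K : Set (EuclideanSpace ℂ (Fin n))}
  {Φ : ℝ → EuclideanSpace ℂ (Fin n) → EuclideanSpace ℂ (Fin n)}

local notation "ℂⁿ" => EuclideanSpace ℂ (Fin n)

theorem IsRungeIn.exists_differentiable_norm_sub_le (hΩ : IsRungeIn Ω) {f : ℂⁿ → ℂⁿ}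
    (hf : DifferentiableOn ℂ f Ω) (hKΩ : K ⊆ Ω) (hK : IsCompact K) {ε : ℝ} (hε : 0 < ε) :
    ∃ g : ℂⁿ → ℂⁿ, Differentiable ℂ g ∧ ∀ z ∈ K, ‖g z - f z‖ < ε := by
  have hnear : {w : Fin n → ℂ | ‖WithLp.toLp 2 w‖ < ε} ∈ 𝓝 0 :=
    (isOpen_lt (by fun_prop) continuous_const).mem_nhds (by simpa using hε)
  obtain ⟨δ, hδ, hδε⟩ := Metric.mem_nhds_iff.1 hnear
  choose g hg hgK using fun i => hΩ (fun z => f z i)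
    ((EuclideanSpace.proj i : ℂⁿ →L[ℂ] ℂ).differentiable.comp_differentiableOn hf) K hKΩ hK δ hδ
  refine ⟨fun z => WithLp.toLp 2 fun i => g i z, differentiable_euclidean.2 hg, fun z hz => ?_⟩
  have : (fun i => g i z - f z i) ∈ ball 0 δ := by
    simpa [pi_norm_lt_iff hδ] using fun i => hgK i z hz
  exact hδε this

namespace IsHolIsotopy

theorem exists_entire_eventually_norm_sub_lt (h : IsHolIsotopy Ω Φ)
    {v : ℝ → ℂⁿ → ℂⁿ} (hvc : ContinuousOn (fun p : ℝ × ℂⁿ => v p.1 p.2) (Icc 0 1 ×ˢ Ω))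
    {t₀ : ℝ} (ht₀ : t₀ ∈ Icc (0 : ℝ) 1) (hv : DifferentiableOn ℂ (v t₀) Ω)
    (hRunge : IsRungeIn (Φ t₀ '' Ω)) (hK : IsCompact K) (hKΩ : K ⊆ Ω) {ε : ℝ} (hε : 0 < ε) :
    ∃ g : ℂⁿ → ℂⁿ, Differentiable ℂ g ∧
      ∀ᶠ t in 𝓝[Icc 0 1] t₀, ∀ z ∈ K, ‖g (Φ t z) - v t z‖ < ε := by
  obtain ⟨g, hg, hgK⟩ := hRunge.exists_differentiable_norm_sub_le
    (hv.comp (differentiableOn_invFunOn_of_injOn h.isOpen (h.differentiableOn t₀ ht₀)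
      (h.injOn t₀ ht₀)) fun w hw => Function.invFunOn_mem hw) (image_mono hKΩ)
    (hK.image_of_continuousOn ((h.differentiableOn t₀ ht₀).continuousOn.mono hKΩ)) hε
  have hcont : ContinuousOn (fun p : ℝ × ℂⁿ => ‖g (Φ p.1 p.2) - v p.1 p.2‖) (Icc 0 1 ×ˢ Ω) :=
    ((hg.continuous.comp_continuousOn h.contDiffOn.continuousOn).sub hvc).norm
  refine ⟨g, hg, ?_⟩
  suffices H : ∀ᶠ t in 𝓝 t₀, ∀ z ∈ K, t ∈ Icc 0 1 → z ∈ Ω → ‖g (Φ t z) - v t z‖ < ε from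
    eventually_nhdsWithin_iff.2 (H.mono fun t hH ht z hz => hH z hz ht (hKΩ hz))
  refine hK.eventually_forall_of_forall_eventually
    (P := fun t z => t ∈ Icc 0 1 → z ∈ Ω → ‖g (Φ t z) - v t z‖ < ε) fun z hz => ?_
  have hz₀ : ‖g (Φ t₀ z) - v t₀ z‖ < ε := by
    simpa [(h.injOn t₀ ht₀).leftInvOn_invFunOn (hKΩ hz)] using hgK _ (mem_image_of_mem _ hz)
  exact (eventually_nhdsWithin_iff.1 ((hcont (t₀, z) ⟨ht₀, hKΩ hz⟩).eventually_lt_const hz₀)).mono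
    fun p hp ht hz => hp ⟨ht, hz⟩

theorem exists_isAutIsotopy_eventually_norm_sub_le (h : IsHolIsotopy Ω Φ) (hn : 2 ≤ n)
    {t₀ : ℝ} (ht₀ : t₀ ∈ Icc (0 : ℝ) 1) (hRunge : IsRungeIn (Φ t₀ '' Ω)) (hK : IsCompact K)
    (hKΩ : K ⊆ Ω) {ε : ℝ} (hε : 0 < ε) :
    ∃ A, IsAutIsotopy A ∧ ∃ ρ > 0, ∀ᶠ t in 𝓝[Icc 0 1] t₀, ∀ s ∈ Ico 0 ρ, t + s ≤ 1 → ∀ z ∈ K,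
      ‖A s (Φ t z) - Φ (t + s) z‖ ≤ ε * s := by
  obtain ⟨v, hvc, hv, hvhol⟩ := h.exists_velocity
  have hcompact := (isCompact_Icc (a := (0 : ℝ)) (b := 1)).prod hK
  have himage : IsCompact ((fun p : ℝ × ℂⁿ => Φ p.1 p.2) '' (Icc 0 1 ×ˢ K)) :=
    hcompact.image_of_continuousOn (h.contDiffOn.continuousOn.mono (prod_mono_right hKΩ))
  have hε3 : 0 < ε / 3 := by positivity
  obtain ⟨g, hg, hgv⟩ :=
    h.exists_entire_eventually_norm_sub_lt hvc ht₀ (hvhol t₀ ht₀) hRunge hK hKΩ hε3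
  obtain ⟨A, hA, δ, hδ, hAg⟩ :=
    exists_isAutIsotopy_norm_sub_le hn (g := ⟨g, hg.continuous⟩) hg himage hε3
  obtain ⟨δ', hδ', hΦv⟩ := exists_forall_norm_sub_sub_smul_le hK
    (hvc.mono (prod_mono_right hKΩ)) (fun t ht z hz => hv t ht z (hKΩ hz)) hε3
  refine ⟨A, hA, min δ δ', by positivity, ?_⟩
  filter_upwards [hgv, self_mem_nhdsWithin] with t htg ht s ⟨hs0, hs⟩ hts z hz
  have hflow : ‖A s (Φ t z) - Φ t z - s • g (Φ t z)‖ ≤ ε / 3 * s :=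
    hAg s ⟨hs0, hs.trans_le (min_le_left _ _)⟩ _ (mem_image_of_mem _ (mk_mem_prod ht hz))
  have hfield : ‖s • (g (Φ t z) - v t z)‖ ≤ ε / 3 * s := by
    rw [norm_smul, Real.norm_of_nonneg hs0, mul_comm]
    gcongr
    exact (htg z hz).le
  have hexpand : ‖Φ (t + s) z - Φ t z - s • v t z‖ ≤ ε / 3 * s := by
    simpa [abs_of_nonneg hs0] using hΦv t ht (t + s) ⟨add_nonneg ht.1 hs0, hts⟩
      (by simpa [abs_of_nonneg hs0] using hs.trans_le (min_le_right _ _)) z hz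
  calc ‖A s (Φ t z) - Φ (t + s) z‖
      = ‖(A s (Φ t z) - Φ t z - s • g (Φ t z)) + s • (g (Φ t z) - v t z)
          - (Φ (t + s) z - Φ t z - s • v t z)‖ := by
        rw [smul_sub]
        abel_nf
    _ ≤ ε / 3 * s + ε / 3 * s + ε / 3 * s :=
        norm_sub_le_of_le (norm_add_le_of_le hflow hfield) hexpand
    _ = ε * s := by ring

theorem exists_pos_forall_exists_isAutIsotopy (h : IsHolIsotopy Ω Φ) (hn : 2 ≤ n)
    (hRunge : ∀ t ∈ Icc (0 : ℝ) 1, IsRungeIn (Φ t '' Ω)) (hK : IsCompact K) (hKΩ : K ⊆ Ω)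
    {ε : ℝ} (hε : 0 < ε) :
    ∃ ρ > 0, ∀ t ∈ Icc (0 : ℝ) 1, ∃ A, IsAutIsotopy A ∧ ∀ s ∈ Ico 0 ρ, t + s ≤ 1 → ∀ z ∈ K,
      ∃ z' ∈ Ω, Φ (t + s) z' = A s (Φ t z) ∧ ‖z' - z‖ ≤ ε * s := by
  obtain ⟨c, hc, hinv⟩ := h.exists_pos_forall_exists_eq hK hKΩ
  let P (ρ t : ℝ) : Prop := ∃ A, IsAutIsotopy A ∧ ∀ s ∈ Ico 0 ρ, t + s ≤ 1 → ∀ z ∈ K,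
    ‖A s (Φ t z) - Φ (t + s) z‖ ≤ c * min ε 1 * s
  have hanti (t : ℝ) : Antitone fun ρ => P ρ t := fun ρ ρ' hρ ⟨A, hA, H⟩ =>
    ⟨A, hA, fun s hs => H s (Ico_subset_Ico_right hρ hs)⟩
  obtain ⟨ρ, hρ, H⟩ := exists_pos_forall_of_isCompact isCompact_Icc hanti fun t ht => by
    obtain ⟨A, hA, ρ, hρ, H⟩ := h.exists_isAutIsotopy_eventually_norm_sub_le hn ht (hRunge t ht)
      hK hKΩ (show 0 < c * min ε 1 by positivity)
    exact ⟨ρ, hρ, H.mono fun t ht => ⟨A, hA, ht⟩⟩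
  refine ⟨ρ, hρ, fun t ht => ?_⟩
  obtain ⟨A, hA, hAΦ⟩ := H t ht
  refine ⟨A, hA, fun s hs hts z hz => ?_⟩
  have hclose := hAΦ s hs hts z hz
  have hs1 : s ≤ 1 := by linarith [ht.1]
  have hle : c * min ε 1 * s ≤ c := by
    rw [mul_assoc]
    exact mul_le_of_le_one_right hc.le (mul_le_one₀ (min_le_right _ _) hs.1 hs1)
  obtain ⟨z', hz', hz'A, hz'z⟩ :=
    hinv (t + s) ⟨add_nonneg ht.1 hs.1, hts⟩ z hz _ (hclose.trans hle)
  refine ⟨z', hz', hz'A, le_of_mul_le_mul_left ?_ hc⟩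
  calc c * ‖z' - z‖ ≤ c * min ε 1 * s := hz'z.trans hclose
    _ ≤ c * ε * s := by
        have := hs.1
        gcongr
        exact min_le_left _ _
    _ = c * (ε * s) := mul_assoc _ _ _

end IsHolIsotopy

/-- The family `α` shadows the isotopy `Φ` on `K` up to time `a`: the point `α t z` is the exact
image under `Φ t` of an initial point of `Ω` that has drifted from `z` with speed at most `ε`. -/
def Shadows (Ω : Set ℂⁿ) (Φ : ℝ → ℂⁿ → ℂⁿ) (K : Set ℂⁿ) (ε a : ℝ) (α : ℝ → C(ℂⁿ, ℂⁿ)) : Prop :=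
  ∀ t ∈ Icc 0 a, ∀ z ∈ K, ∃ z' ∈ Ω, Φ t z' = α t z ∧ ‖z' - z‖ ≤ ε * t

theorem shadows_zero (hΦ0 : ∀ z ∈ Ω, Φ 0 z = z) (hKΩ : K ⊆ Ω) {ε : ℝ} {α : ℝ → C(ℂⁿ, ℂⁿ)}
    (hα : IsAutIsotopy α) : Shadows Ω Φ K ε 0 α := by
  intro t ht z hz
  obtain rfl : t = 0 := le_antisymm ht.2 ht.1
  exact ⟨z, hKΩ hz, by simp [hα.zero, hΦ0 z (hKΩ hz)], by simp⟩

theorem mem_cthickening_of_norm_sub_le_mul {z z' : ℂⁿ} (hz : z ∈ K) {ε t : ℝ} (hε : 0 ≤ ε)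
    (ht : t ≤ 1) (hz' : ‖z' - z‖ ≤ ε * t) : z' ∈ cthickening ε K :=
  mem_cthickening_of_dist_le z' z ε K hz
    (dist_eq_norm z' z ▸ hz'.trans (mul_le_of_le_one_right hε ht))

theorem Shadows.concat {ε a b : ℝ} {α A : ℝ → C(ℂⁿ, ℂⁿ)} (hα : Shadows Ω Φ K ε a α)
    (hε : 0 ≤ ε) (ha : a ∈ Icc 0 1) (hA0 : A 0 = ContinuousMap.id _)
    (hA : ∀ s ∈ Icc 0 (b - a), ∀ z ∈ cthickening ε K,
      ∃ z' ∈ Ω, Φ (a + s) z' = A s (Φ a z) ∧ ‖z' - z‖ ≤ ε * s) :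
    Shadows Ω Φ K ε b fun t => (A (max 0 (t - a))).comp (α (min t a)) := by
  intro t ht z hz
  rcases le_total t a with hta | hta
  · simpa [hta, hA0] using hα t ⟨ht.1, hta⟩ z hz
  obtain ⟨y, -, hyα, hy⟩ := hα a ⟨ha.1, le_rfl⟩ z hz
  obtain ⟨z', hz', hz'A, hz'y⟩ := hA (t - a) ⟨sub_nonneg.2 hta, sub_le_sub_right ht.2 a⟩ y
    (mem_cthickening_of_norm_sub_le_mul hz hε ha.2 hy)
  rw [add_sub_cancel] at hz'A
  refine ⟨z', hz', by simp [hta, hz'A, hyα], ?_⟩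
  calc ‖z' - z‖ ≤ ‖z' - y‖ + ‖y - z‖ := norm_sub_le_norm_sub_add_norm_sub _ _ _
    _ ≤ ε * (t - a) + ε * a := add_le_add hz'y hy
    _ = ε * t := by ring

theorem IsHolIsotopy.exists_isAutIsotopy_shadows (h : IsHolIsotopy Ω Φ) (hn : 2 ≤ n)
    (hRunge : ∀ t ∈ Icc (0 : ℝ) 1, IsRungeIn (Φ t '' Ω)) (hΦ0 : ∀ z ∈ Ω, Φ 0 z = z)
    (hK : IsCompact K) {ε : ℝ} (hε : 0 < ε) (hKΩ : cthickening ε K ⊆ Ω) :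
    ∃ α, IsAutIsotopy α ∧ Shadows Ω Φ K ε 1 α := by
  obtain ⟨ρ, hρ, hstep⟩ :=
    h.exists_pos_forall_exists_isAutIsotopy hn hRunge hK.cthickening hKΩ hε
  have hpolygon (j : ℕ) : ∃ α, IsAutIsotopy α ∧ Shadows Ω Φ K ε (min 1 (j * (ρ / 2))) α := by
    induction j with
    | zero =>
      refine ⟨_, isAutIsotopy_const_id, ?_⟩
      simpa using shadows_zero hΦ0 ((self_subset_cthickening K).trans hKΩ) isAutIsotopy_const_id
    | succ j ih =>
      obtain ⟨α, hα, hαΦ⟩ := ih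
      set a := min 1 (j * (ρ / 2)) with ha_def
      have ha : a ∈ Icc 0 1 := ⟨by positivity, min_le_left _ _⟩
      obtain ⟨A, hA, hAΦ⟩ := hstep a ha
      have hba : min 1 (((j + 1 : ℕ) : ℝ) * (ρ / 2)) ≤ a + ρ / 2 := by
        rw [ha_def, ← min_add_add_right, Nat.cast_succ, add_one_mul]
        gcongr
        linarith
      refine ⟨_, hA.comp hα (by fun_prop) (by fun_prop) (by simp [ha.1]) (by simp [ha.1]),
        hαΦ.concat hε.le ha hA.zero fun s hs => hAΦ s ⟨hs.1, ?_⟩ ?_⟩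
      · linarith [hs.2]
      · linarith [hs.2, min_le_left 1 (((j + 1 : ℕ) : ℝ) * (ρ / 2))]
  obtain ⟨N, hN⟩ := exists_nat_ge (1 / (ρ / 2))
  rw [div_le_iff₀ (by positivity)] at hN
  simpa [hN] using hpolygon N

theorem IsHolIsotopy.exists_cthickening_subset_forall_norm_sub_lt (h : IsHolIsotopy Ω Φ)
    (hK : IsCompact K) (hKΩ : K ⊆ Ω) {ε : ℝ} (hε : 0 < ε) :
    ∃ δ > 0, cthickening δ K ⊆ Ω ∧ ∀ t ∈ Icc (0 : ℝ) 1, ∀ z ∈ K, ∀ z', ‖z' - z‖ ≤ δ →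
      ‖Φ t z' - Φ t z‖ < ε := by
  obtain ⟨κ, hκ, hκΩ⟩ := hK.exists_cthickening_subset_open h.isOpen hKΩ
  obtain ⟨θ, hθ, hΦ⟩ := Metric.uniformContinuousOn_iff.1
    ((isCompact_Icc.prod hK.cthickening).uniformContinuousOn_of_continuous
      (h.contDiffOn.continuousOn.mono (prod_mono_right hκΩ))) ε hε
  refine ⟨min κ (θ / 2), by positivity, (cthickening_mono (min_le_left _ _) K).trans hκΩ,
    fun t ht z hz z' hz' => ?_⟩
  rw [← dist_eq_norm] at hz' ⊢
  refine hΦ (t, z') ⟨ht, ?_⟩ (t, z) ⟨ht, self_subset_cthickening K hz⟩ ?_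
  · exact mem_cthickening_of_dist_le z' z κ K hz (hz'.trans (min_le_left _ _))
  · rw [dist_prod_same_left]
    exact hz'.trans_lt ((min_le_right _ _).trans_lt (half_lt_self hθ))

end EulerPolygons

/-- **The Andersén–Lempert theorem for ℂⁿ, n ≥ 2.**
Let `Ω ⊆ ℂⁿ` be open and `Φ : [0,1] × Ω → ℂⁿ` a `C¹`-smooth isotopy of
injective holomorphic maps with Runge images, starting at the inclusion.  Then
on any compact `K ⊆ Ω` the isotopy can be approximated to any precision `ε` by
a continuous family of holomorphic automorphisms of `ℂⁿ` starting at the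
identity. -/
theorem andersen_lempert_Cn
    (n : ℕ) (hn : 2 ≤ n)
    (Ω : Set (EuclideanSpace ℂ (Fin n))) (hΩ : IsOpen Ω)
    (Φ : ℝ → EuclideanSpace ℂ (Fin n) → EuclideanSpace ℂ (Fin n))
    (hΦsmooth : ContDiffOn ℝ 1
      (fun p : ℝ × EuclideanSpace ℂ (Fin n) => Φ p.1 p.2) (Set.Icc (0:ℝ) 1 ×ˢ Ω))
    (hΦhol : ∀ t ∈ Set.Icc (0:ℝ) 1, DifferentiableOn ℂ (Φ t) Ω)
    (hΦinj : ∀ t ∈ Set.Icc (0:ℝ) 1, Set.InjOn (Φ t) Ω)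
    (hΦ0 : ∀ z ∈ Ω, Φ 0 z = z)
    (hΦRunge : ∀ t ∈ Set.Icc (0:ℝ) 1, IsRungeIn (Φ t '' Ω))
    (ε : ℝ) (hε : 0 < ε)
    (K : Set (EuclideanSpace ℂ (Fin n))) (hKΩ : K ⊆ Ω) (hK : IsCompact K) :
    ∃ α : ℝ → EuclideanSpace ℂ (Fin n) → EuclideanSpace ℂ (Fin n),
      ContinuousOn (fun p : ℝ × EuclideanSpace ℂ (Fin n) => α p.1 p.2)
        (Set.Icc (0:ℝ) 1 ×ˢ Set.univ) ∧
      (∀ t ∈ Set.Icc (0:ℝ) 1, IsHolomorphicAutomorphism (α t)) ∧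
      (α 0 = id) ∧
      (∀ t ∈ Set.Icc (0:ℝ) 1, ∀ z ∈ K, ‖α t z - Φ t z‖ < ε) := by
  have h : IsHolIsotopy Ω Φ := ⟨hΩ, hΦsmooth, hΦhol, hΦinj⟩
  obtain ⟨δ, hδ, hδΩ, hδε⟩ := h.exists_cthickening_subset_forall_norm_sub_lt hK hKΩ hε
  obtain ⟨α, hα, hshadow⟩ := h.exists_isAutIsotopy_shadows hn hΦRunge hΦ0 hK hδ hδΩ
  refine ⟨fun t => α t, ?_, fun t _ => hα.isHolomorphicAutomorphism t, by simp [hα.zero], ?_⟩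
  · exact (ContinuousMap.continuous_uncurry_of_continuous ⟨α, hα.continuous⟩).continuousOn
  · intro t ht z hz
    obtain ⟨z', -, hz'α, hz'⟩ := hshadow t ht z hz
    simpa only [hz'α] using hδε t ht z hz z' (hz'.trans (mul_le_of_le_one_right hδ.le ht.2))
end

section
/- Let n ≥ 2 and m ∈ ℕ. The group of holomorphic automorphisms of ℂⁿ acts m-transitively: for any pairwise distinct points x₁, …, x_m ∈ ℂⁿ and any pairwise distinct points y₁, …, y_m ∈ ℂⁿ there exists a holomorphic automorphism F of ℂⁿ with F(x_i) = y_i for every i = 1, …, m. (This is Corollary 2.6 of the paper specialized to X = ℂⁿ.) -/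
/-!
If `ℓ ∘ Q = 0`, the shear `z ↦ z + Q (ℓ z)` is inverted by `z ↦ z - Q (ℓ z)`. Interpolating by
polynomials, shears along a linear form `ℓ` move points with distinct `ℓ`-values anywhere within
their fibres of `ℓ`. Choose `ℓ` separating the `xᵢ` and also the `yᵢ`; since the dimension exceeds
one, there is a form `u` whose values can be prescribed on each fibre of `ℓ`. A first shear along
`ℓ` moves `xᵢ` to `pᵢ` with `u pᵢ = cᵢ`, where the `cᵢ` are distinct scalars; likewise `yᵢ` moves
to `qᵢ` with `u qᵢ = cᵢ`; finally a shear along `u` moves `pᵢ` to `qᵢ`.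
-/

open Function Set
open scoped ContDiff Manifold

section LinearForms

variable {K V : Type*} [Field K] [TopologicalSpace K] [IsTopologicalRing K]
  [AddCommGroup V] [TopologicalSpace V] [Module K V] [SeparatingDual K V]

lemma exists_strongDual_injOn [Infinite K] {s : Set V} (hs : s.Finite) :
    ∃ ℓ : StrongDual K V, InjOn ℓ s := by
  have : Finite s.offDiag := hs.offDiag
  let evalSub (p : s.offDiag) : Module.Dual K (StrongDual K V) :=
    (topDualPairing K V).flip (p.1.1 - p.1.2)
  have evalSub_ne_zero (p : s.offDiag) : ∃ ℓ, evalSub p ℓ ≠ 0 :=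
    SeparatingDual.exists_ne_zero (sub_ne_zero.mpr p.2.2.2)
  obtain ⟨ℓ, hℓ⟩ := Module.Dual.exists_forall_ne_zero_of_forall_exists evalSub evalSub_ne_zero
  refine ⟨ℓ, fun a ha b hb hab => by_contra fun hne => hℓ ⟨(a, b), ha, hb, hne⟩ ?_⟩
  simp [evalSub, hab]

lemma exists_strongDual_forall_exists_apply_eq (hV : 1 < Module.rank K V) (ℓ : Module.Dual K V) :
    ∃ u : StrongDual K V, ∀ z c, ∃ w, ℓ w = ℓ z ∧ u w = c := by
  have ker_ne_bot : LinearMap.ker ℓ ≠ ⊥ := fun h =>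
    hV.not_ge (by simpa using LinearMap.lift_rank_le_of_injective ℓ (LinearMap.ker_eq_bot.mp h))
  obtain ⟨v, hℓv, hv⟩ := Submodule.exists_mem_ne_zero_of_ne_bot ker_ne_bot
  obtain ⟨u, huv⟩ := SeparatingDual.exists_eq_one (R := K) hv
  rw [LinearMap.mem_ker] at hℓv
  exact ⟨u, fun z c => ⟨z + (c - u z) • v, by simp [hℓv], by simp [huv]⟩⟩

end LinearForms

section Shear

variable {𝕜 E F : Type*} [NontriviallyNormedField 𝕜] [NormedAddCommGroup E] [NormedSpace 𝕜 E]
  [NormedAddCommGroup F] [NormedSpace 𝕜 F] {n : ℕ∞ω}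

/-- The shear `z ↦ z + Q (ℓ z)` of `E` along the fibres of a continuous linear map `ℓ`, where `Q`
takes values in the kernel of `ℓ`; it is as smooth as `Q`. -/
def shear (ℓ : E →L[𝕜] F) (Q : F → E) (hQ : ContDiff 𝕜 n Q) (hℓQ : ∀ t, ℓ (Q t) = 0) :
    E ≃ₘ^n⟮𝓘(𝕜, E), 𝓘(𝕜, E)⟯ E where
  toFun z := z + Q (ℓ z)
  invFun z := z - Q (ℓ z)
  left_inv z := by simp [hℓQ]
  right_inv z := by simp [hℓQ]
  contMDiff_toFun := (contDiff_id.add (hQ.comp ℓ.contDiff)).contMDiff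
  contMDiff_invFun := (contDiff_id.sub (hQ.comp ℓ.contDiff)).contMDiff

lemma shear_apply (ℓ : E →L[𝕜] F) (Q : F → E) (hQ : ContDiff 𝕜 n Q) (hℓQ : ∀ t, ℓ (Q t) = 0)
    (z : E) : shear ℓ Q hQ hℓQ z = z + Q (ℓ z) :=
  rfl

variable {ι : Type*} [Finite ι]

lemma exists_contDiff_interpolation_mem_span {t : ι → 𝕜} (ht : Injective t) (w : ι → E) :
    ∃ Q : 𝕜 → E, ContDiff 𝕜 n Q ∧ (∀ i, Q (t i) = w i) ∧
      ∀ s, Q s ∈ Submodule.span 𝕜 (range w) := by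
  classical
  have := Fintype.ofFinite ι
  let L (i : ι) : Polynomial 𝕜 := Lagrange.basis Finset.univ t i
  have eval_L (i j : ι) : (L j).eval (t i) = if i = j then 1 else 0 := by
    split_ifs with h
    · rw [h, Lagrange.eval_basis_self ht.injOn (Finset.mem_univ j)]
    · exact Lagrange.eval_basis_of_ne (Ne.symm h) (Finset.mem_univ i)
  refine ⟨fun s => ∑ j, (L j).eval s • w j, ?_, fun i => by simp [eval_L], fun s => ?_⟩
  · exact ContDiff.sum fun j _ => ((L j).contDiff_aeval n).smul contDiff_const
  · exact Submodule.sum_mem _ fun j _ =>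
      Submodule.smul_mem _ _ (Submodule.subset_span (mem_range_self j))

lemma exists_diffeomorph_apply_eq_of_strongDual_eq (ℓ : StrongDual 𝕜 E) {x y : ι → E}
    (hx : Injective (ℓ ∘ x)) (hxy : ∀ i, ℓ (y i) = ℓ (x i)) :
    ∃ F : E ≃ₘ^n⟮𝓘(𝕜, E), 𝓘(𝕜, E)⟯ E, ∀ i, F (x i) = y i := by
  obtain ⟨Q, hQ, hQx, hQ_span⟩ := exists_contDiff_interpolation_mem_span (n := n) hx (y - x)
  have span_le_ker : Submodule.span 𝕜 (range (y - x)) ≤ LinearMap.ker ℓ.toLinearMap :=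
    Submodule.span_le.mpr (range_subset_iff.mpr fun i => by simp [hxy])
  have hℓQ (t : 𝕜) : ℓ (Q t) = 0 := LinearMap.mem_ker.mp (span_le_ker (hQ_span t))
  refine ⟨shear ℓ Q hQ hℓQ, fun i => ?_⟩
  have hQi : Q (ℓ (x i)) = y i - x i := hQx i
  rw [shear_apply, hQi, add_sub_cancel]

end Shear

theorem automorphisms_act_m_transitively_general {𝕜 E ι : Type*} [NontriviallyNormedField 𝕜]
    [NormedAddCommGroup E] [NormedSpace 𝕜 E] [SeparatingDual 𝕜 E] [Finite ι]
    (hE : 1 < Module.rank 𝕜 E) (n : ℕ∞ω) {x y : ι → E} (hx : Injective x) (hy : Injective y) :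
    ∃ F : E ≃ₘ^n⟮𝓘(𝕜, E), 𝓘(𝕜, E)⟯ E, ∀ i, F (x i) = y i := by
  obtain ⟨ℓ, hℓ⟩ := exists_strongDual_injOn (K := 𝕜) ((finite_range x).union (finite_range y))
  have hℓx : Injective (ℓ ∘ x) := (hℓ.injective_iff _ subset_union_left).mpr hx
  have hℓy : Injective (ℓ ∘ y) := (hℓ.injective_iff _ subset_union_right).mpr hy
  obtain ⟨u, hu⟩ := exists_strongDual_forall_exists_apply_eq hE ℓ.toLinearMap
  obtain ⟨c⟩ : Nonempty (ι ↪ 𝕜) :=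
    ⟨(Finite.equivFin ι).toEmbedding.trans (Fin.valEmbedding.trans (Infinite.natEmbedding 𝕜))⟩
  choose p hℓp hup using fun i => hu (x i) (c i)
  choose q hℓq huq using fun i => hu (y i) (c i)
  have hup_inj : Injective (u ∘ p) := fun i j hij => c.injective (by simpa [hup] using hij)
  obtain ⟨F, hF⟩ := exists_diffeomorph_apply_eq_of_strongDual_eq (n := n) ℓ hℓx hℓp
  obtain ⟨G, hG⟩ := exists_diffeomorph_apply_eq_of_strongDual_eq (n := n) u hup_inj
    fun i => (huq i).trans (hup i).symm
  obtain ⟨H, hH⟩ := exists_diffeomorph_apply_eq_of_strongDual_eq (n := n) ℓ hℓy hℓq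
  exact ⟨(F.trans G).trans H.symm, fun i => by simp [hF, hG, ← hH]⟩

lemma IsHolomorphicAutomorphism.of_diffeomorph {d : ℕ} {n : ℕ∞ω} (hn : n ≠ 0)
    (F : EuclideanSpace ℂ (Fin d) ≃ₘ^n⟮𝓘(ℂ, EuclideanSpace ℂ (Fin d)),
      𝓘(ℂ, EuclideanSpace ℂ (Fin d))⟯ EuclideanSpace ℂ (Fin d)) :
    IsHolomorphicAutomorphism F :=
  ⟨F.contDiff.differentiable hn, F.symm, F.symm.contDiff.differentiable hn,
    F.symm_apply_apply, F.apply_symm_apply⟩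

/-- **m-transitivity of the holomorphic automorphism group of ℂⁿ, n ≥ 2.**
For any pairwise distinct points `x₁, …, x_m` and pairwise distinct points
`y₁, …, y_m` in `ℂⁿ` there is a holomorphic automorphism `F` of `ℂⁿ` with
`F xᵢ = yᵢ` for all `i`. -/
theorem automorphisms_act_m_transitively
    (n : ℕ) (hn : 2 ≤ n) (m : ℕ)
    (x y : Fin m → EuclideanSpace ℂ (Fin n))
    (hx : Function.Injective x) (hy : Function.Injective y) :
    ∃ F : EuclideanSpace ℂ (Fin n) → EuclideanSpace ℂ (Fin n),
      IsHolomorphicAutomorphism F ∧ ∀ i, F (x i) = y i := by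
  obtain ⟨F, hF⟩ := automorphisms_act_m_transitively_general (𝕜 := ℂ)
    (by exact_mod_cast Module.lt_rank_of_lt_finrank (by simpa using Nat.lt_of_succ_le hn)) ω hx hy
  exact ⟨F, .of_diffeomorph (by simp) F, hF⟩
end
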